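/- In the unitary case, Y_n(F) ⊆ j ⋆ GL_n(E'), and X^j consists of exactly two G^j(E)-orbits. -/

import Mathlib

open Matrix

namespace GaloisPair

variable {E' : Type} [Field E']

/-- `g ∈ G^j(E) = {g ∈ GL_n(E') : τ(g)ᵀ j g = j}`. -/
def Gj {n : ℕ} (τ : E' → E') (j g : Matrix (Fin n) (Fin n) E') : Prop :=
  IsUnit g ∧ (g.map τ)ᵀ * j * g = j

/-- `x ∈ X^j = {x ∈ G^j(E) : x·σ(x) = 1}`. -/
def Xj {n : ℕ} (σ τ : E' → E') (j x : Matrix (Fin n) (Fin n) E') : Prop :=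
  Gj τ j x ∧ x * x.map σ = 1

/-- `x'` lies in the `G^j(E)`-orbit of `x` for twisted conjugation `g·x = g x σ(g)⁻¹`. -/
def orbGj {n : ℕ} (σ τ : E' → E') (j x x' : Matrix (Fin n) (Fin n) E') : Prop :=
  ∃ g, Gj τ j g ∧ x' = g * x * (g.map σ)⁻¹

/-- `y ∈ Y_n(F)`: invertible, entries fixed by `σ` (i.e. in `F'`), and `τ(y)ᵀ = ε • y`. -/
def inYnF {n : ℕ} (σ τ : E' → E') (ε : E') (y : Matrix (Fin n) (Fin n) E') : Prop :=
  IsUnit y ∧ (∀ a b, σ (y a b) = y a b) ∧ (y.map τ)ᵀ = ε • y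

end GaloisPair

open GaloisPair


section PartOne1
set_option linter.all false
open Polynomial

section PartOne
variable {p : ℕ} [Fact p.Prime] {F : Type} [Field F] [Algebra ℚ_[p] F] [FiniteDimensional ℚ_[p] F]
  [Algebra ℤ_[p] F] [IsScalarTower ℤ_[p] ℚ_[p] F]

theorem aux_integral_iff (x : F) : IsIntegral ℤ_[p] x ↔ spectralNorm ℚ_[p] F x ≤ 1 := by
  have hx : IsIntegral ℚ_[p] x := Algebra.IsIntegral.isIntegral x
  rw [spectralNorm, spectralValue_le_one_iff (minpoly.monic hx)]
  constructor
  · intro h n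
    rw [minpoly.isIntegrallyClosed_eq_field_fractions' ℚ_[p] h, coeff_map]
    exact PadicInt.norm_le_one _
  · intro h
    have hl : minpoly ℚ_[p] x ∈ Polynomial.lifts (algebraMap ℤ_[p] ℚ_[p]) := by
      rw [Polynomial.lifts_iff_coeff_lifts]
      intro n
      exact ⟨⟨_, h n⟩, rfl⟩
    obtain ⟨q, hq, -, hqm⟩ := lifts_and_natDegree_eq_and_monic hl (minpoly.monic hx)
    refine ⟨q, hqm, ?_⟩
    have h1 := minpoly.aeval ℚ_[p] x
    rw [← hq, aeval_map_algebraMap] at h1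
    exact h1

theorem aux_inv (x : F) : IsIntegral ℤ_[p] x ∨ IsIntegral ℤ_[p] x⁻¹ := by
  rw [aux_integral_iff, aux_integral_iff]
  by_cases hx : x = 0
  · left; subst hx; rw [spectralNorm_zero]; exact zero_le_one
  have h := map_mul (spectralMulAlgNorm ℚ_[p] F) x x⁻¹
  rw [mul_inv_cancel₀ hx, map_one, spectralMulAlgNorm_def, spectralMulAlgNorm_def] at h
  by_contra! hc
  nlinarith [hc.1, hc.2]


theorem aux_grp {A : Type*} [CommGroup A] (f : A →* A) (U : Subgroup A) (hU : U.index ≠ 0)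
    (h : U.map f ≤ U) (hk : U ⊓ f.ker = ⊥) :
    f.range.index = Nat.card f.ker * (U.map f).relIndex U := by
  have h1 := Subgroup.index_map U f
  have h2 := Subgroup.relIndex_mul_index h
  have h3 := Subgroup.relIndex_mul_index (le_sup_left : U ≤ U ⊔ f.ker)
  rw [Subgroup.relIndex_sup_left, ← Subgroup.inf_relIndex_right, hk, Subgroup.relIndex_bot_left] at h3
  have h4 : (U ⊔ f.ker).index ≠ 0 := by
    intro h0; rw [h0] at h3; simp at h3; exact hU h3.symm
  rw [h1, ← h3] at h2
  apply Nat.eq_of_mul_eq_mul_left (Nat.pos_of_ne_zero h4)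
  rw [← h2]; ring

variable (p F) in
noncomputable abbrev OO := integralClosure ℤ_[p] F

theorem aux_tf : Module.IsTorsionFree ℤ_[p] F := by
  have : FaithfulSMul ℤ_[p] F := by
    rw [faithfulSMul_iff_algebraMap_injective, IsScalarTower.algebraMap_eq ℤ_[p] ℚ_[p] F]
    exact (algebraMap ℚ_[p] F).injective.comp (IsFractionRing.injective ℤ_[p] ℚ_[p])
  infer_instance

theorem aux_fr : IsFractionRing (OO p F) F :=
  integralClosure.isFractionRing_of_finite_extension ℚ_[p] F

theorem aux_val : ValuationRing (OO p F) := by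
  have : IsFractionRing (OO p F) F := aux_fr
  rw [ValuationRing.iff_isInteger_or_isInteger (OO p F) F]
  intro x
  rcases aux_inv (p := p) x with h | h
  · exact Or.inl ⟨⟨x, h⟩, rfl⟩
  · exact Or.inr ⟨⟨x⁻¹, h⟩, rfl⟩

theorem aux_p_nonunit : ¬ IsUnit (p : OO p F) := by
  intro h
  obtain ⟨v, hv⟩ := h.exists_right_inv
  have h1 : (p : F) * (v : F) = 1 := by
    have := congrArg (fun z : OO p F => (z : F)) hv
    simpa using this
  have hvi : IsIntegral ℤ_[p] (v : F) := v.2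
  have : CharZero F := charZero_of_injective_algebraMap (algebraMap ℚ_[p] F).injective
  have h2 : (v : F) = algebraMap ℚ_[p] F ((p : ℚ_[p])⁻¹) := by
    rw [map_inv₀, map_natCast]
    exact (eq_inv_of_mul_eq_one_right h1)
  rw [h2, isIntegral_algebraMap_iff (algebraMap ℚ_[p] F).injective] at hvi
  obtain ⟨z, hz⟩ := IsIntegrallyClosed.isIntegral_iff.mp hvi
  have h3 : ‖((p : ℚ_[p])⁻¹)‖ ≤ 1 := by rw [← hz]; exact PadicInt.norm_le_one z
  rw [norm_inv, Padic.norm_p, inv_inv] at h3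
  have := (Fact.out : p.Prime).one_lt
  have : (1:ℝ) < p := by exact_mod_cast this
  linarith

theorem aux_dvr : IsDiscreteValuationRing (OO p F) := by
  have : Module.IsTorsionFree ℤ_[p] F := aux_tf (p := p)
  have : ValuationRing (OO p F) := aux_val
  have : IsNoetherianRing (OO p F) := IsIntegralClosure.isNoetherianRing ℤ_[p] ℚ_[p] F (OO p F)
  refine ((IsDiscreteValuationRing.TFAE (OO p F) ?_).out 0 1).2 aux_val
  intro hf
  have : CharZero F := charZero_of_injective_algebraMap (algebraMap ℚ_[p] F).injective
  have hp : (p : OO p F) ≠ 0 := by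
    intro h
    have := congrArg (fun z : OO p F => (z : F)) h
    simp at this
    exact (Fact.out : p.Prime).ne_zero this
  obtain ⟨b, hb⟩ := hf.mul_inv_cancel hp
  exact aux_p_nonunit (IsUnit.of_mul_eq_one b hb)

-- finiteness of quotients
theorem aux_Zp_fin (m : ℕ) (hm : m ≠ 0) : Finite (ℤ_[p] ⧸ Ideal.span {(m : ℤ_[p])}) := by
  have hm' : (m : ℤ_[p]) ≠ 0 := by exact_mod_cast hm
  have h := PadicInt.unitCoeff_spec hm'
  have h2 : Ideal.span {(m : ℤ_[p])} = Ideal.span {(p : ℤ_[p]) ^ (m : ℤ_[p]).valuation} := by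
    rw [Ideal.span_singleton_eq_span_singleton]
    exact ⟨(PadicInt.unitCoeff hm')⁻¹, by rw [Units.mul_inv_eq_iff_eq_mul, mul_comm]; exact h⟩
  rw [h2, ← PadicInt.ker_toZModPow]
  have : NeZero (p ^ (m : ℤ_[p]).valuation) := ⟨pow_ne_zero _ (Fact.out : p.Prime).ne_zero⟩
  exact Finite.of_injective _ (RingHom.kerLift_injective (PadicInt.toZModPow (p := p) (m : ℤ_[p]).valuation))

theorem aux_quot (m : ℕ) : Nat.card (OO p F ⧸ Ideal.span {(m : OO p F)}) =
    Nat.card (ℤ_[p] ⧸ Ideal.span {(m : ℤ_[p])}) ^ Module.finrank ℚ_[p] F := by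
  have : Module.IsTorsionFree ℤ_[p] F := aux_tf (p := p)
  have : Module.Finite ℤ_[p] (OO p F) := IsIntegralClosure.finite ℤ_[p] ℚ_[p] F (OO p F)
  have : Module.Free ℤ_[p] (OO p F) := IsIntegralClosure.module_free ℤ_[p] ℚ_[p] F (OO p F)
  have hr : Module.finrank ℤ_[p] (OO p F) = Module.finrank ℚ_[p] F :=
    IsIntegralClosure.rank ℤ_[p] ℚ_[p] F (OO p F)
  let b := Module.finBasis ℤ_[p] (OO p F)
  let I : Ideal ℤ_[p] := Ideal.span {(m : ℤ_[p])}
  let φ : OO p F →+ (Fin (Module.finrank ℤ_[p] (OO p F)) → ℤ_[p] ⧸ I) :=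
    { toFun := fun x i => Ideal.Quotient.mk I (b.repr x i)
      map_zero' := by ext i; simp
      map_add' := by intro x y; ext i; simp }
  have hs : Function.Surjective φ := by
    intro y
    choose z hz using fun i => Ideal.Quotient.mk_surjective (y i)
    refine ⟨b.equivFun.symm z, ?_⟩
    ext i
    change Ideal.Quotient.mk I (b.repr (b.equivFun.symm z) i) = _
    rw [← b.equivFun_apply, LinearEquiv.apply_symm_apply, hz]
  have hk : φ.ker = (Ideal.span {(m : OO p F)}).toAddSubgroup := by
    ext x
    rw [AddMonoidHom.mem_ker, Submodule.mem_toAddSubgroup, Ideal.mem_span_singleton]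
    constructor
    · intro h
      have h' : ∀ i, (m : ℤ_[p]) ∣ b.repr x i := by
        intro i
        rw [← Ideal.mem_span_singleton]
        exact Ideal.Quotient.eq_zero_iff_mem.mp (congrFun h i)
      choose c hc using h'
      refine ⟨b.equivFun.symm c, ?_⟩
      apply b.repr.injective
      ext i
      rw [hc, ← nsmul_eq_mul (α := OO p F), map_nsmul, Finsupp.smul_apply, ← b.equivFun_apply (b.equivFun.symm c), LinearEquiv.apply_symm_apply]
      simp
    · rintro ⟨c, rfl⟩
      ext i
      change Ideal.Quotient.mk I (b.repr _ i) = 0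
      rw [← nsmul_eq_mul, map_nsmul, Ideal.Quotient.eq_zero_iff_mem, Ideal.mem_span_singleton]
      simp
  have e := QuotientAddGroup.quotientKerEquivOfSurjective φ hs
  have := Nat.card_congr e.toEquiv
  rw [Nat.card_fun, Nat.card_fin, hk] at this
  rw [← hr]
  exact this

theorem aux_quot_fin (m : ℕ) (hm : m ≠ 0) : Finite (OO p F ⧸ Ideal.span {(m : OO p F)}) := by
  have := aux_Zp_fin (p := p) m hm
  apply Nat.finite_of_card_ne_zero
  rw [aux_quot]
  exact pow_ne_zero _ Nat.card_pos.ne'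

end PartOne

end PartOne1
section PartTwo
variable {p : ℕ} [Fact p.Prime] {F : Type} [Field F] [Algebra ℚ_[p] F] [FiniteDimensional ℚ_[p] F]

noncomputable def aux_starEquiv (D : F) [Fact (∀ r : F, r ^ 2 ≠ D + 0 * r)] :
    QuadraticAlgebra F D 0 ≃ₐ[ℚ_[p]] QuadraticAlgebra F D 0 where
  toFun := star
  invFun := star
  left_inv := star_star
  right_inv := star_star
  map_mul' := fun x y => by rw [star_mul, mul_comm]
  map_add' := fun x y => star_add x y
  commutes' := fun r => by
    rw [IsScalarTower.algebraMap_apply ℚ_[p] F (QuadraticAlgebra F D 0)]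
    ext <;> simp

open scoped QuadraticAlgebra in
theorem aux_qa1 (z D : F) (h2 : (2 : F) ≠ 0) (hD : D = 1 + 4 * z) :
    (⟨-1/2, 1/2⟩ : QuadraticAlgebra F D 0) * star ⟨-1/2, 1/2⟩ = algebraMap F _ (-z) := by
  ext
  · simp; field_simp; rw [hD]; ring
  · simp; ring

open scoped QuadraticAlgebra in
theorem aux_qa2 (D : F) (h2 : (2 : F) ≠ 0) :
    (⟨-1/2, 1/2⟩ : QuadraticAlgebra F D 0) + star ⟨-1/2, 1/2⟩ = -1 := by
  ext
  · simp; field_simp; norm_num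
  · simp

theorem aux_hensel_F (z : F) (hz : spectralNorm ℚ_[p] F z < 1) : ∃ t : F, t ^ 2 + t = z := by
  have hc : CharZero F := charZero_of_injective_algebraMap (algebraMap ℚ_[p] F).injective
  by_cases hD : ∃ r : F, r ^ 2 = 1 + 4 * z
  · obtain ⟨r, hr⟩ := hD
    refine ⟨(r - 1) / 2, ?_⟩
    field_simp
    linear_combination hr
  exfalso
  push Not at hD
  set D := 1 + 4 * z with hDdef
  have hfact : Fact (∀ r : F, r ^ 2 ≠ D + 0 * r) := ⟨fun r => by simpa using hD r⟩
  let L := QuadraticAlgebra F D 0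
  have hfin : FiniteDimensional ℚ_[p] L := Module.Finite.trans F L
  let N := spectralMulAlgNorm ℚ_[p] L
  let t : L := ⟨-1/2, 1/2⟩
  have h1 : N (star t) = N t := by
    exact (spectralNorm_eq_of_equiv (aux_starEquiv (p := p) D) t).symm
  have h2 : t * star t = algebraMap F L (-z) := aux_qa1 z D two_ne_zero hDdef
  have h3 : t + star t = - 1 := aux_qa2 D two_ne_zero
  have h4 : N (algebraMap F L (-z)) < 1 := by
    change spectralNorm ℚ_[p] L _ < 1
    rw [← spectralNorm.eq_of_tower (K := ℚ_[p]) (L := L), spectralNorm_neg]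
    · exact hz
    · exact Algebra.IsAlgebraic.isAlgebraic z
  rw [← h2, map_mul, h1] at h4
  have h5 : N t < 1 := by nlinarith [apply_nonneg N t]
  have h6 : N (t + star t) ≤ max (N t) (N (star t)) :=
    isNonarchimedean_spectralNorm (K := ℚ_[p]) (L := L) t (star t)
  rw [h3, map_neg_eq_map, map_one, h1, max_self] at h6
  linarith

variable [Algebra ℤ_[p] F] [IsScalarTower ℤ_[p] ℚ_[p] F]

theorem aux_hensel (z : OO p F) : ∃ t : OO p F, t ^ 2 + t = p * z ∧ (p : OO p F) ∣ t := by
  have hv : ValuationRing (OO p F) := aux_val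
  have hz : spectralNorm ℚ_[p] F ((p : F) * (z : F)) < 1 := by
    have h := map_mul (spectralMulAlgNorm ℚ_[p] F) (p : F) z
    simp only [spectralMulAlgNorm_def] at h
    rw [h]
    have h1 : spectralNorm ℚ_[p] F (z : F) ≤ 1 := (aux_integral_iff _).1 z.2
    have h2 : spectralNorm ℚ_[p] F (p : F) < 1 := by
      have := spectralNorm_extends (K := ℚ_[p]) (L := F) (p : ℚ_[p])
      rw [map_natCast] at this
      rw [this]
      exact Padic.norm_p_lt_one
    nlinarith [spectralNorm_nonneg (K := ℚ_[p]) (z : F), spectralNorm_nonneg (K := ℚ_[p]) (p : F)]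
  obtain ⟨t, ht⟩ := aux_hensel_F _ hz
  have hti : IsIntegral ℤ_[p] t := by
    rcases aux_inv (p := p) t with h | h
    · exact h
    by_cases h0 : t = 0
    · subst h0; exact isIntegral_zero
    have : t = (p : OO p F) * z * t⁻¹ - 1 := by
      field_simp
      rw [show ((p : OO p F) : F) = (p : F) by simp]
      linear_combination ht
    rw [this]
    exact ((((p : OO p F) * z).2).mul h).sub isIntegral_one
  let t' : OO p F := ⟨t, hti⟩
  have ht' : t' ^ 2 + t' = p * z := by
    apply Subtype.ext
    simpa [t'] using ht
  have hloc : IsUnit (t' + 1) ∨ IsUnit (- t') := by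
    apply IsLocalRing.isUnit_or_isUnit_of_add_one
    ring
  rcases hloc with h | h
  · refine ⟨t', ht', ?_⟩
    have : (p : OO p F) ∣ t' * (t' + 1) := ⟨z, by rw [← ht']; ring⟩
    exact (h.dvd_mul_right).1 this
  · refine ⟨- t' - 1, by rw [← ht']; ring, ?_⟩
    have : (p : OO p F) ∣ (- t') * (- t' - 1) := ⟨z, by rw [← ht']; ring⟩
    exact (h.dvd_mul_left).1 this

-- U_m
variable (p F) in
noncomputable def UU (m : ℕ) : Subgroup (OO p F)ˣ :=
  (Units.map (Ideal.Quotient.mk (Ideal.span {(m : OO p F)})).toMonoidHom).ker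

theorem mem_UU (m : ℕ) (u : (OO p F)ˣ) : u ∈ UU p F m ↔ (m : OO p F) ∣ (u : OO p F) - 1 := by
  rw [UU, MonoidHom.mem_ker, Units.ext_iff, ← Ideal.mem_span_singleton, ← Ideal.Quotient.eq_zero_iff_mem,
    map_sub, sub_eq_zero]
  simp

theorem aux_UU_index (m : ℕ) (hm : m ≠ 0) : (UU p F m).index ≠ 0 := by
  have := aux_quot_fin (p := p) (F := F) m hm
  rw [UU, Subgroup.index_ker]
  exact Nat.card_pos.ne'

theorem aux_UU_unit (x : OO p F) : IsUnit (1 + 2 * p * x) := by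
  have hv : ValuationRing (OO p F) := aux_val
  by_contra h
  have h1 : 1 + 2 * p * x ∈ IsLocalRing.maximalIdeal (OO p F) := h
  have h2 : (p : OO p F) ∈ IsLocalRing.maximalIdeal (OO p F) := aux_p_nonunit
  have h3 : (1 : OO p F) ∈ IsLocalRing.maximalIdeal (OO p F) := by
    have := sub_mem h1 (Ideal.mul_mem_left _ (2 * x) h2)
    convert this using 1; ring
  exact (Ideal.ne_top_iff_one _).1 (IsLocalRing.maximalIdeal.isMaximal _).ne_top h3

theorem aux_UU_map : (UU p F (2 * p)).map (powMonoidHom 2) = UU p F (4 * p) := by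
  ext u
  rw [mem_UU]
  constructor
  · rintro ⟨v, hv, rfl⟩
    obtain ⟨x, hx⟩ := (mem_UU _ _).1 hv
    refine ⟨x + p * x ^ 2, ?_⟩
    have : (v : OO p F) = 1 + (2 * p : ℕ) * x := by rw [← hx]; ring
    simp only [powMonoidHom_apply, Units.val_pow_eq_pow_val, this]
    push_cast; ring
  · rintro ⟨z, hz⟩
    obtain ⟨t, ht, y, hy⟩ := aux_hensel z
    obtain ⟨v, hv⟩ := aux_UU_unit (p := p) y
    refine ⟨v, (mem_UU _ _).2 ⟨y, by rw [hv]; push_cast; ring⟩, ?_⟩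
    ext1
    simp only [powMonoidHom_apply, Units.val_pow_eq_pow_val, hv]
    have : (u : OO p F) = 1 + 4 * p * z := by push_cast at hz; rw [← hz]; ring
    rw [this, show (2 : OO p F) * p * y = 2 * (p * y) by ring, ← hy]
    linear_combination 4 * ht

theorem aux_charZero : CharZero (OO p F) := by
  have hc : CharZero F := charZero_of_injective_algebraMap (algebraMap ℚ_[p] F).injective
  exact ⟨fun a b h => by
    have := congrArg (fun z : OO p F => (z : F)) h
    simpa using this⟩

theorem aux_UU_rel : (UU p F (4 * p)).relIndex (UU p F (2 * p)) =
    Nat.card (ℤ_[p] ⧸ Ideal.span {((2 : ℕ) : ℤ_[p])}) ^ Module.finrank ℚ_[p] F := by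
  rw [← aux_quot]
  have hc : CharZero (OO p F) := aux_charZero
  have hp : (p : OO p F) ≠ 0 := by exact_mod_cast (Fact.out : p.Prime).ne_zero
  have h2p : ((2 * p : ℕ) : OO p F) ≠ 0 := by
    exact_mod_cast mul_ne_zero two_ne_zero (Fact.out : p.Prime).ne_zero
  let I : Ideal (OO p F) := Ideal.span {((2 : ℕ) : OO p F)}
  choose c hc using fun u : UU p F (2 * p) => (mem_UU _ _).1 u.2
  have hcu : ∀ (u : UU p F (2 * p)) x, ((u : (OO p F)ˣ) : OO p F) = 1 + (2 * p : ℕ) * x → c u = x := by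
    intro u x hx
    apply mul_left_cancel₀ h2p
    rw [← hc, hx]; ring
  let φ : UU p F (2 * p) →* Multiplicative (OO p F ⧸ I) :=
    { toFun := fun u => Multiplicative.ofAdd (Ideal.Quotient.mk I (c u))
      map_one' := by
        rw [hcu 1 0 (by simp)]; simp
      map_mul' := by
        intro u v
        have := hcu (u * v) (c u + c v + 2 * p * c u * c v) (by
          push_cast
          rw [show ((u : (OO p F)ˣ) : OO p F) = 1 + (2 * p : ℕ) * c u by rw [← hc]; ring,
           show ((v : (OO p F)ˣ) : OO p F) = 1 + (2 * p : ℕ) * c v by rw [← hc]; ring]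
          push_cast; ring)
        rw [this, ← ofAdd_add, ← map_add]
        congr 1
        rw [Ideal.Quotient.eq, Ideal.mem_span_singleton]
        exact ⟨p * c u * c v, by push_cast; ring⟩ }
  have hs : Function.Surjective φ := by
    intro y
    obtain ⟨x, hx⟩ := Ideal.Quotient.mk_surjective (Multiplicative.toAdd y)
    obtain ⟨v, hv⟩ := aux_UU_unit (p := p) x
    refine ⟨⟨v, (mem_UU _ _).2 ⟨x, by rw [hv]; push_cast; ring⟩⟩, ?_⟩
    change Multiplicative.ofAdd (Ideal.Quotient.mk I (c _)) = y
    rw [hcu _ x (by rw [hv]; push_cast; ring), hx]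
    rfl
  have hk : φ.ker = (UU p F (4 * p)).subgroupOf (UU p F (2 * p)) := by
    ext u
    rw [MonoidHom.mem_ker, Subgroup.mem_subgroupOf, mem_UU, hc]
    change Multiplicative.ofAdd (Ideal.Quotient.mk I (c u)) = 1 ↔ _
    rw [ofAdd_eq_one, Ideal.Quotient.eq_zero_iff_mem, Ideal.mem_span_singleton,
      show ((4 * p : ℕ) : OO p F) = (2 * p : ℕ) * (2 : ℕ) by push_cast; ring]
    exact (mul_dvd_mul_iff_left h2p).symm
  rw [Subgroup.relIndex, ← hk, Subgroup.index_ker, MonoidHom.range_eq_top.2 hs]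
  rw [Subgroup.card_top]
  rfl

theorem aux_unit_sq : (powMonoidHom 2 : (OO p F)ˣ →* (OO p F)ˣ).range.index = 2 *
    Nat.card (ℤ_[p] ⧸ Ideal.span {((2 : ℕ) : ℤ_[p])}) ^ Module.finrank ℚ_[p] F := by
  have hc : CharZero (OO p F) := aux_charZero
  have hp := (Fact.out : p.Prime).ne_zero
  have hker : ∀ u : (OO p F)ˣ, u ∈ (powMonoidHom 2 : (OO p F)ˣ →* (OO p F)ˣ).ker ↔ u = 1 ∨ u = -1 := by
    intro u
    rw [MonoidHom.mem_ker, powMonoidHom_apply]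
    constructor
    · intro h
      have h' : ((u : OO p F)) ^ 2 = 1 := by
        rw [← Units.val_pow_eq_pow_val, h]; rfl
      rcases eq_or_eq_neg_of_sq_eq_sq (u : OO p F) 1 (by rw [h', one_pow]) with h | h
      · left; ext1; exact h
      · right; ext1; exact h
    · rintro (rfl | rfl) <;> simp
  rw [aux_grp _ (UU p F (2 * p)) (aux_UU_index _ (mul_ne_zero two_ne_zero hp)), aux_UU_map, aux_UU_rel]
  · congr 1
    have : ((powMonoidHom 2 : (OO p F)ˣ →* (OO p F)ˣ).ker : Set (OO p F)ˣ) = {1, -1} := by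
      ext u
      simpa using hker u
    change Nat.card ((powMonoidHom 2 : (OO p F)ˣ →* (OO p F)ˣ).ker : Set (OO p F)ˣ) = 2
    rw [this, Nat.card_coe_set_eq, Set.ncard_pair]
    intro h
    have h' := congrArg (fun u : (OO p F)ˣ => (u : OO p F)) h
    have h2 : (1 : OO p F) + 1 = 0 := by
      nth_rewrite 1 [show (1 : OO p F) = -1 from h']; ring
    norm_num at h2
  · rw [aux_UU_map]
    intro u
    rw [mem_UU, mem_UU]
    intro h
    exact dvd_trans ⟨2, by push_cast; ring⟩ h
  · rw [eq_bot_iff]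
    rintro u ⟨h1, h2⟩
    rcases (hker u).1 h2 with h | h
    · exact h
    · exfalso
      subst h
      obtain ⟨x, hx⟩ := (mem_UU _ _).1 h1
      push_cast at hx
      have : (p : OO p F) * (-x) = 1 := by
        have h2 : (2 : OO p F) ≠ 0 := two_ne_zero
        apply mul_left_cancel₀ h2
        linear_combination hx
      exact aux_p_nonunit (IsUnit.of_mul_eq_one _ this)
end PartTwo

section PartThree
variable {p : ℕ} [Fact p.Prime] {F : Type} [Field F] [Algebra ℚ_[p] F] [FiniteDimensional ℚ_[p] F]

theorem aux_sq_index' [Algebra ℤ_[p] F] [IsScalarTower ℤ_[p] ℚ_[p] F] :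
    (powMonoidHom 2 : Fˣ →* Fˣ).range.index = 4 *
    Nat.card (ℤ_[p] ⧸ Ideal.span {((2 : ℕ) : ℤ_[p])}) ^ Module.finrank ℚ_[p] F := by
  have hdvr : IsDiscreteValuationRing (OO p F) := aux_dvr
  have hfr : IsFractionRing (OO p F) F := aux_fr
  let ι : (OO p F)ˣ →* Fˣ := Units.map (algebraMap (OO p F) F).toMonoidHom
  have hι : ∀ u : (OO p F)ˣ, ((ι u : Fˣ) : F) = ((u : OO p F) : F) := fun u => rfl
  let S : Subgroup Fˣ := (powMonoidHom 2 : Fˣ →* Fˣ).range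
  have hint : ∀ (y : F) (z : OO p F), y ^ 2 = z → ∃ w : OO p F, (w : F) = y := by
    intro y z h
    have : IsIntegral ℤ_[p] (y ^ 2) := by rw [h]; exact z.2
    exact ⟨⟨y, this.of_pow two_pos⟩, rfl⟩
  have h1 : (S.comap ι) = (powMonoidHom 2 : (OO p F)ˣ →* (OO p F)ˣ).range := by
    ext u
    constructor
    · rintro ⟨y, hy⟩
      have hy' : (y : F) ^ 2 = ((u : OO p F) : F) := by
        rw [← hι, ← hy]; rfl
      obtain ⟨w, hw⟩ := hint _ _ hy'
      have hw2 : w * (w * (u⁻¹ : (OO p F)ˣ)) = 1 := by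
        rw [← mul_assoc, Units.mul_inv_eq_iff_eq_mul, one_mul]
        apply Subtype.ext
        rw [← hy', ← hw]; push_cast; ring
      have hw3 : IsUnit w := IsUnit.of_mul_eq_one _ hw2
      refine ⟨hw3.unit, ?_⟩
      ext1; apply Subtype.ext
      simp [hw, hy']
    · rintro ⟨v, rfl⟩
      exact ⟨ι v, by simp⟩
  have h2 : S.relIndex (ι.range ⊔ S) = (powMonoidHom 2 : (OO p F)ˣ →* (OO p F)ˣ).range.index := by
    rw [Subgroup.relIndex_sup_right, ← Subgroup.index_comap, h1]
  obtain ⟨ϖ, hϖ⟩ := IsDiscreteValuationRing.exists_irreducible (OO p F)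
  have hϖ0 : (ϖ : F) ≠ 0 := by
    intro h; exact hϖ.ne_zero (Subtype.ext h)
  have hmem : ∀ x : Fˣ, x ∈ ι.range ⊔ S ↔ ∃ (u : (OO p F)ˣ) (y : Fˣ), (x : F) = (u : OO p F) * (y : F) ^ 2 := by
    intro x
    rw [Subgroup.mem_sup]
    constructor
    · rintro ⟨_, ⟨u, rfl⟩, _, ⟨y, rfl⟩, rfl⟩
      exact ⟨u, y, rfl⟩
    · rintro ⟨u, y, h⟩
      exact ⟨_, ⟨u, rfl⟩, _, ⟨y, rfl⟩, by ext1; rw [h]; rfl⟩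
  have hV : (ι.range ⊔ S).index = 2 := by
    rw [Subgroup.index_eq_two_iff]
    refine ⟨Units.mk0 (ϖ : F) hϖ0, ?_⟩
    have hnot : Units.mk0 (ϖ : F) hϖ0 ∉ ι.range ⊔ S := by
      rw [hmem]
      rintro ⟨u, y, h⟩
      rw [Units.val_mk0] at h
      have : (y : F) ^ 2 = ((((u⁻¹ : (OO p F)ˣ) : OO p F) * ϖ : OO p F) : F) := by
        push_cast
        rw [h, ← mul_assoc, ← Subalgebra.coe_mul, Units.inv_mul]; simp
      obtain ⟨w, hw⟩ := hint _ _ this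
      have hw2 : ϖ = (u * w) * w := by
        apply Subtype.ext; rw [h, ← hw]; push_cast; ring
      have hwu : IsUnit w := by
        rcases hϖ.isUnit_or_isUnit hw2 with h | h
        · exact isUnit_of_mul_isUnit_right h
        · exact h
      exact hϖ.not_isUnit (by rw [hw2]; exact (u.isUnit.mul hwu).mul hwu)
    have hor : ∀ b : Fˣ, b * Units.mk0 (ϖ : F) hϖ0 ∈ ι.range ⊔ S ∨ b ∈ ι.range ⊔ S := by
      intro b
      obtain ⟨x, y, hy, hxy⟩ := IsFractionRing.div_surjective (A := OO p F) (b : F)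
      have hy0 : y ≠ 0 := nonZeroDivisors.ne_zero hy
      have hb0 : (b : F) ≠ 0 := b.ne_zero
      have hx0 : x ≠ 0 := by rintro rfl; rw [map_zero, zero_div] at hxy; exact hb0 hxy.symm
      have hyF : (y : F) ≠ 0 := fun h => hy0 (Subtype.ext h)
      have hxy' : (b : F) = x / y := hxy.symm
      obtain ⟨n, u, hn⟩ := IsDiscreteValuationRing.eq_unit_mul_pow_irreducible (mul_ne_zero hx0 hy0) hϖ
      have hn' : (x : F) * y = (u : OO p F) * (ϖ : F) ^ n := by
        have := congrArg (fun z : OO p F => (z : F)) hn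
        simpa using this
      rcases Nat.even_or_odd' n with ⟨k, rfl | rfl⟩
      · right
        rw [hmem]
        refine ⟨u, Units.mk0 ((ϖ : F) ^ k / y) (div_ne_zero (pow_ne_zero _ hϖ0) hyF), ?_⟩
        rw [hxy', Units.val_mk0]
        field_simp
        rw [hn']; ring
      · left
        rw [hmem]
        refine ⟨u, Units.mk0 ((ϖ : F) ^ (k + 1) / y) (div_ne_zero (pow_ne_zero _ hϖ0) hyF), ?_⟩
        rw [Units.val_mul, hxy', Units.val_mk0, Units.val_mk0]
        field_simp
        linear_combination (ϖ : F) * hn'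
    intro b
    rcases hor b with h | h
    · refine Or.inl ⟨h, fun h' => hnot ?_⟩
      exact (Subgroup.mul_mem_cancel_left _ h').1 h
    · refine Or.inr ⟨h, fun h' => hnot ?_⟩
      exact (Subgroup.mul_mem_cancel_left _ h).1 h'
  have h3 := Subgroup.relIndex_mul_index (le_sup_right : S ≤ ι.range ⊔ S)
  rw [h2, hV, aux_unit_sq] at h3
  rw [← h3]; ring

theorem aux_sq_index (p : ℕ) [Fact p.Prime] (F : Type) [Field F] [Algebra ℚ_[p] F] [FiniteDimensional ℚ_[p] F] :
    (powMonoidHom 2 : Fˣ →* Fˣ).range.index = 4 *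
    Nat.card (ℤ_[p] ⧸ Ideal.span {((2 : ℕ) : ℤ_[p])}) ^ Module.finrank ℚ_[p] F := by
  letI : Algebra ℤ_[p] F := Algebra.compHom F (algebraMap ℤ_[p] ℚ_[p])
  haveI : IsScalarTower ℤ_[p] ℚ_[p] F := IsScalarTower.of_algebraMap_eq (fun x => rfl)
  exact aux_sq_index'

/-- norm subgroup -/
def NN (a : F) : Subgroup Fˣ where
  carrier := {c | ∃ x y : F, (c : F) = x ^ 2 - a * y ^ 2}
  one_mem' := ⟨1, 0, by simp⟩
  mul_mem' := by
    rintro c d ⟨x, y, h⟩ ⟨z, w, h'⟩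
    exact ⟨x * z + a * y * w, x * w + y * z, by rw [Units.val_mul, h, h']; ring⟩
  inv_mem' := by
    rintro c ⟨x, y, h⟩
    refine ⟨x / c, y / c, ?_⟩
    have := c.ne_zero
    rw [Units.val_inv_eq_inv_val]
    field_simp
    exact h

theorem aux_norm_index (p : ℕ) [Fact p.Prime] (F : Type) [Field F] [Algebra ℚ_[p] F]
    [FiniteDimensional ℚ_[p] F] (a : F) (ha : ∀ r : F, r ^ 2 ≠ a) : (NN a).index = 2 := by
  have hc : CharZero F := charZero_of_injective_algebraMap (algebraMap ℚ_[p] F).injective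
  have hfact : Fact (∀ r : F, r ^ 2 ≠ a + 0 * r) := ⟨fun r => by simpa using ha r⟩
  have hfin : FiniteDimensional ℚ_[p] (QuadraticAlgebra F a 0) := Module.Finite.trans F _
  have hrank : Module.finrank ℚ_[p] (QuadraticAlgebra F a 0) = 2 * Module.finrank ℚ_[p] F := by
    rw [← Module.finrank_mul_finrank ℚ_[p] F (QuadraticAlgebra F a 0), QuadraticAlgebra.finrank_eq_two, mul_comm]
  have hF := aux_sq_index p F
  have hL := aux_sq_index p (QuadraticAlgebra F a 0)
  rw [hrank] at hL
  set q := Nat.card (ℤ_[p] ⧸ Ideal.span {((2 : ℕ) : ℤ_[p])}) with hq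
  have hqpos : 0 < q := by
    have := aux_Zp_fin (p := p) 2 two_ne_zero
    exact Nat.card_pos
  let SF : Subgroup Fˣ := (powMonoidHom 2 : Fˣ →* Fˣ).range
  let SL : Subgroup (QuadraticAlgebra F a 0)ˣ := (powMonoidHom 2 : (QuadraticAlgebra F a 0)ˣ →* _).range
  let N : (QuadraticAlgebra F a 0)ˣ →* Fˣ := Units.map QuadraticAlgebra.norm
  let ι : Fˣ →* (QuadraticAlgebra F a 0)ˣ := Units.map (algebraMap F (QuadraticAlgebra F a 0)).toMonoidHom
  have hNval : ∀ z, ((N z : Fˣ) : F) = (z : QuadraticAlgebra F a 0).re ^ 2 - a * (z : QuadraticAlgebra F a 0).im ^ 2 := by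
    intro z
    change QuadraticAlgebra.norm (z : QuadraticAlgebra F a 0) = _
    rw [QuadraticAlgebra.norm_def]; ring
  have hNr : N.range = NN a := by
    ext c
    constructor
    · rintro ⟨z, rfl⟩
      exact ⟨_, _, hNval z⟩
    · rintro ⟨x, y, h⟩
      have h0 : (⟨x, y⟩ : QuadraticAlgebra F a 0) ≠ 0 := by
        intro h1
        have hx : x = 0 := congrArg QuadraticAlgebra.re h1
        have hy : y = 0 := congrArg QuadraticAlgebra.im h1
        apply c.ne_zero
        rw [h, hx, hy]; ring
      exact ⟨Units.mk0 _ h0, by ext1; rw [hNval]; exact h.symm⟩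
  have e1 : SF.relIndex (NN a) * (NN a).index = SF.index := by
    apply Subgroup.relIndex_mul_index
    rintro _ ⟨y, rfl⟩
    exact ⟨y, 0, by simp⟩
  have e2 : SF.relIndex (NN a) = (SF.comap N).index := by
    rw [Subgroup.index_comap, hNr]
  have e3 : SF.comap N = ι.range ⊔ SL := by
    ext z
    rw [Subgroup.mem_sup]
    constructor
    · rintro ⟨c, hc⟩
      have hc' : (z : QuadraticAlgebra F a 0) * star (z : QuadraticAlgebra F a 0)
          = algebraMap F _ ((c : F) ^ 2) := by
        rw [← QuadraticAlgebra.algebraMap_norm_eq_mul_star]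
        congr 1
        change ((N z : Fˣ) : F) = _
        rw [← hc]; rfl
      by_cases hw : algebraMap F (QuadraticAlgebra F a 0) c + z = 0
      · refine ⟨ι (-c), ⟨_, rfl⟩, 1, Subgroup.one_mem _, ?_⟩
        ext1
        rw [mul_one, eq_neg_of_add_eq_zero_right hw]
        simp [ι]
      · let w : (QuadraticAlgebra F a 0)ˣ := Units.mk0 _ hw
        refine ⟨ι (c / N w), ⟨_, rfl⟩, w ^ 2, ⟨w, rfl⟩, ?_⟩
        have h1 : (z : QuadraticAlgebra F a 0) * star (w : QuadraticAlgebra F a 0) = algebraMap F _ c * w := by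
          simp only [w, Units.val_mk0, star_add, mul_add, hc']
          have : star (algebraMap F (QuadraticAlgebra F a 0) c) = algebraMap F _ c := by ext <;> simp
          rw [this, map_pow]; ring
        have h2 : (w : QuadraticAlgebra F a 0) * star (w : QuadraticAlgebra F a 0) = ι (N w) := by
          rw [← QuadraticAlgebra.algebraMap_norm_eq_mul_star]; rfl
        rw [map_div, div_mul_eq_mul_div, div_eq_iff_eq_mul]
        ext1
        rw [Units.val_mul, Units.val_mul, ← h2, Units.val_pow_eq_pow_val]
        change algebraMap F _ (c : F) * _ = _
        linear_combination - (w : QuadraticAlgebra F a 0) * h1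
    · rintro ⟨_, ⟨c, rfl⟩, _, ⟨w, rfl⟩, rfl⟩
      rw [Subgroup.mem_comap, map_mul]
      refine Subgroup.mul_mem _ ⟨c, ?_⟩ ⟨N w, ?_⟩
      · ext1; rw [hNval]; simp [ι]
      · simp
  have e4 : SL.relIndex (ι.range ⊔ SL) * (ι.range ⊔ SL).index = SL.index :=
    Subgroup.relIndex_mul_index le_sup_right
  have e5 : SL.relIndex (ι.range ⊔ SL) = (SL.comap ι).index := by
    rw [Subgroup.relIndex_sup_right, ← Subgroup.index_comap]
  have hle : SF ≤ SL.comap ι := by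
    rintro _ ⟨y, rfl⟩
    exact ⟨ι y, by simp⟩
  have e6 : SF.relIndex (SL.comap ι) * (SL.comap ι).index = SF.index :=
    Subgroup.relIndex_mul_index hle
  have e7 : SF.relIndex (SL.comap ι) = 2 := by
    have ha0 : a ≠ 0 := fun h => ha 0 (by rw [h]; ring)
    have hcase : ∀ b ∈ SL.comap ι, b ∈ SF ∨ ∃ y : F, (b : F) = a * y ^ 2 := by
      rintro b ⟨z, hz⟩
      have hz' : (z : QuadraticAlgebra F a 0) * z = algebraMap F _ (b : F) := by
        rw [← sq, ← Units.val_pow_eq_pow_val]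
        exact congrArg Units.val hz
      have hre := congrArg QuadraticAlgebra.re hz'
      have him := congrArg QuadraticAlgebra.im hz'
      simp at hre him
      set x := (z : QuadraticAlgebra F a 0).re
      set y := (z : QuadraticAlgebra F a 0).im
      have hxy : x * y = 0 := by
        have : (2 : F) * (x * y) = 0 := by linear_combination him
        simpa using this
      rcases mul_eq_zero.1 hxy with h | h
      · right; exact ⟨y, by rw [← hre, h]; ring⟩
      · left
        have hx : x ≠ 0 := by
          intro hx; apply b.ne_zero; rw [← hre, h, hx]; ring
        refine ⟨Units.mk0 x hx, ?_⟩
        ext1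
        simp
        rw [← hre, h]; ring
    rw [Subgroup.relIndex, Subgroup.index_eq_two_iff]
    have hamem : Units.mk0 a ha0 ∈ SL.comap ι := by
      have h0 : (⟨0, 1⟩ : QuadraticAlgebra F a 0) ≠ 0 := by
        intro h
        have := congrArg QuadraticAlgebra.im h
        simp at this
      refine ⟨Units.mk0 _ h0, ?_⟩
      ext1
      change (⟨0, 1⟩ : QuadraticAlgebra F a 0) ^ 2 = algebraMap F _ a
      rw [sq]
      ext <;> simp
    have hanot : Units.mk0 a ha0 ∉ SF := by
      rintro ⟨r, hr⟩
      exact ha r (congrArg Units.val hr)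
    refine ⟨⟨_, hamem⟩, ?_⟩
    rintro ⟨b, hb⟩
    simp only [Subgroup.mem_subgroupOf, Subgroup.coe_mul]
    rcases hcase b hb with h | ⟨y, h⟩
    · exact Or.inr ⟨h, fun h' => hanot ((Subgroup.mul_mem_cancel_left _ h).1 h')⟩
    · have h2 : b * Units.mk0 a ha0 ∈ SF := by
        have hy : y ≠ 0 := by intro hy; apply b.ne_zero; rw [h, hy]; ring
        refine ⟨Units.mk0 (a * y) (mul_ne_zero ha0 hy), ?_⟩
        ext1
        simp [h]; ring
      exact Or.inl ⟨h2, fun h' => hanot ((Subgroup.mul_mem_cancel_left _ h').1 h2)⟩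
  rw [e2, e3] at e1
  rw [e5] at e4
  rw [e7] at e6
  change SF.index = _ at hF
  change SL.index = _ at hL
  rw [hF] at e1 e6
  rw [hL] at e4
  set d := Module.finrank ℚ_[p] F
  set X := (ι.range ⊔ SL).index
  set Y := (SL.comap ι).index
  have hY : Y = 2 * q ^ d := by linarith
  have hQ : 0 < q ^ d := by positivity
  have hX : X = 2 * q ^ d := by
    rw [hY, show 2 * d = d + d by ring, pow_add] at e4
    apply Nat.eq_of_mul_eq_mul_left hQ
    nlinarith
  rw [hX] at e1
  apply Nat.eq_of_mul_eq_mul_left hQ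
  nlinarith
end PartThree

section PartFour
variable {p : ℕ} [Fact p.Prime] {F : Type} [Field F] [Algebra ℚ_[p] F] [FiniteDimensional ℚ_[p] F]

theorem aux_NN_mul (p : ℕ) [Fact p.Prime] [Algebra ℚ_[p] F] [FiniteDimensional ℚ_[p] F] {a : F}
    (ha : ∀ r : F, r ^ 2 ≠ a) (c d : Fˣ) (hc : c ∉ NN a) (hd : d ∉ NN a) :
    c * d ∈ NN a := by
  rw [Subgroup.mul_mem_iff_of_index_two (aux_norm_index p F a ha)]
  tauto

theorem aux_NN_exists (p : ℕ) [Fact p.Prime] [Algebra ℚ_[p] F] [FiniteDimensional ℚ_[p] F] {a : F}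
    (ha : ∀ r : F, r ^ 2 ≠ a) : ∃ c : Fˣ, c ∉ NN a := by
  by_contra! h
  have h1 := aux_norm_index p F a ha
  rw [(Subgroup.eq_top_iff' _).2 h, Subgroup.index_top] at h1
  norm_num at h1

theorem aux_NN_symm [CharZero F] (a c : Fˣ) (h : c ∈ NN (a : F)) : a ∈ NN (c : F) := by
  obtain ⟨x, y, h⟩ := h
  by_cases hy : y = 0
  · have hx : x ≠ 0 := by rintro rfl; apply c.ne_zero; rw [h, hy]; ring
    refine ⟨(a + 1) / 2, (a - 1) / (2 * x), ?_⟩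
    rw [h, hy]; field_simp; ring
  · refine ⟨x / y, 1 / y, ?_⟩
    rw [h]; field_simp; ring

theorem aux_NN_prod (p : ℕ) [Fact p.Prime] [Algebra ℚ_[p] F] [FiniteDimensional ℚ_[p] F] (a b : Fˣ)
    (ha : ∀ r : F, r ^ 2 ≠ a) (hb : ∀ r : F, r ^ 2 ≠ b) (hab : ∀ r : F, r ^ 2 ≠ a * b) (c : Fˣ) :
    ∃ n ∈ NN (a : F), ∃ m ∈ NN (b : F), c = n * m := by
  have hch : CharZero F := charZero_of_injective_algebraMap (algebraMap ℚ_[p] F).injective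
  by_cases hca : c ∈ NN (a : F)
  · exact ⟨c, hca, 1, Subgroup.one_mem _, by simp⟩
  by_cases hcb : c ∈ NN (b : F)
  · exact ⟨1, Subgroup.one_mem _, c, hcb, by simp⟩
  by_cases heq : ∀ e, e ∈ NN (a : F) ↔ e ∈ NN (b : F)
  · exfalso
    obtain ⟨e, he⟩ := aux_NN_exists p hab
    apply he
    rw [← Units.val_mul]
    apply aux_NN_symm
    by_cases hs : ∃ r : F, r ^ 2 = e
    · obtain ⟨r, hr⟩ := hs
      have hr0 : r ≠ 0 := by rintro rfl; apply e.ne_zero; rw [← hr]; ring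
      apply aux_NN_symm
      exact ⟨r, 0, by rw [hr]; ring⟩
    push Not at hs
    by_cases h : a ∈ NN (e : F)
    · exact Subgroup.mul_mem _ h (aux_NN_symm _ _ ((heq e).1 (aux_NN_symm _ _ h)))
    · refine aux_NN_mul p hs _ _ h fun h' => h ?_
      exact (aux_NN_symm _ _ ((heq e).2 (aux_NN_symm _ _ h')))
  · push Not at heq
    obtain ⟨e, ⟨h1, h2⟩ | ⟨h1, h2⟩⟩ := heq
    · refine ⟨e, h1, e⁻¹ * c, aux_NN_mul p hb _ _ (by simpa using h2) hcb, by simp⟩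
    · refine ⟨c * e⁻¹, aux_NN_mul p ha _ _ hca (by simpa using h1), e, h2, by simp⟩

theorem aux_univ (p : ℕ) [Fact p.Prime] [Algebra ℚ_[p] F] [FiniteDimensional ℚ_[p] F] (a : F)
    (ha : ∀ r : F, r ^ 2 ≠ a) (u v w : Fˣ) :
    ∃ x₁ y₁ x₂ y₂ : F, (u : F) * (x₁ ^ 2 - a * y₁ ^ 2) + v * (x₂ ^ 2 - a * y₂ ^ 2) = w := by
  have hch : CharZero F := charZero_of_injective_algebraMap (algebraMap ℚ_[p] F).injective
  have hdiv : ∀ s t : Fˣ, t * s⁻¹ ∈ NN a → ∃ x y : F, (s : F) * (x ^ 2 - a * y ^ 2) = t := by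
    rintro s t ⟨x, y, h⟩
    refine ⟨x, y, ?_⟩
    rw [← h, ← Units.val_mul]; simp
  by_cases hu : w * u⁻¹ ∈ NN a
  · obtain ⟨x, y, h⟩ := hdiv _ _ hu
    exact ⟨x, y, 0, 0, by rw [h]; ring⟩
  by_cases hv : w * v⁻¹ ∈ NN a
  · obtain ⟨x, y, h⟩ := hdiv _ _ hv
    exact ⟨0, 0, x, y, by rw [h]; ring⟩
  -- same coset
  have hex : ∃ n ∈ NN a, ∃ m ∈ NN a, ∃ s : Fˣ, (s : F) = n + m ∧ s ∉ NN a := by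
    by_contra! hcl
    -- closed under addition
    have hnat : ∀ n m : Fˣ, n ∈ NN a → m ∈ NN a → ∀ s : Fˣ, (s : F) = n + m → s ∈ NN a :=
      fun n m hn hm s hs => hcl n hn m hm s hs
    have hsum : ∀ k : ℕ, ∀ hk : (k : F) ≠ 0, Units.mk0 (k : F) hk ∈ NN a := by
      intro k
      induction k with
      | zero => intro hk; simp at hk
      | succ k ih =>
        intro hk
        by_cases h0 : k = 0
        · subst h0; convert Subgroup.one_mem (NN a); ext; simp
        · have hk0 : (k : F) ≠ 0 := by exact_mod_cast h0
          refine hnat (Units.mk0 (k : F) hk0) 1 (ih hk0) (Subgroup.one_mem _) _ ?_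
          simp
    have hp := (Fact.out : p.Prime).pos
    obtain ⟨t, ht⟩ := aux_hensel_F (p := p) (F := F) (-(p : F)) (by
      rw [spectralNorm_neg (Algebra.IsAlgebraic.isAlgebraic _)]
      have := spectralNorm_extends (K := ℚ_[p]) (L := F) (p : ℚ_[p])
      rw [map_natCast] at this
      rw [this]
      exact Padic.norm_p_lt_one)
    have hk : ((4 * p - 1 : ℕ) : F) ≠ 0 := by
      have : 4 * p - 1 ≠ 0 := by omega
      exact_mod_cast this
    have hk' : ((4 * p - 1 : ℕ) : F) = 4 * p - 1 := by
      rw [Nat.cast_sub (by omega)]; push_cast; ring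
    have hr2 : (2 * t + 1) ^ 2 = - ((4 * p - 1 : ℕ) : F) := by
      rw [hk']; linear_combination 4 * ht
    have hr0 : 2 * t + 1 ≠ 0 := by
      intro h; rw [h] at hr2; apply hk; linear_combination hr2
    have hsq : ∀ x : Fˣ, x * x ∈ NN a := fun x => ⟨x, 0, by push_cast; ring⟩
    have hneg : (-1 : Fˣ) ∈ NN a := by
      have h := Subgroup.mul_mem _ (hsq (Units.mk0 _ hr0)) (Subgroup.inv_mem _ (hsum _ hk))
      convert h using 1
      rw [eq_mul_inv_iff_mul_eq]
      ext1
      push_cast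
      simp only [Units.val_mk0]
      rw [← sq, hr2]; ring
    obtain ⟨e, he⟩ := aux_NN_exists p ha
    by_cases h1 : (e : F) + 1 = 0
    · apply he
      convert hneg
      ext1; push_cast; exact eq_neg_of_add_eq_zero_left h1
    by_cases h2 : (e : F) - 1 = 0
    · apply he
      convert Subgroup.one_mem (NN a)
      ext1; push_cast; exact sub_eq_zero.1 h2
    have h3 : ((e : F) + 1) / 2 ≠ 0 := div_ne_zero h1 two_ne_zero
    have h4 : ((e : F) - 1) / 2 ≠ 0 := div_ne_zero h2 two_ne_zero
    apply he
    refine hnat _ _ (hsq (Units.mk0 _ h3)) (Subgroup.mul_mem _ hneg (hsq (Units.mk0 _ h4))) e ?_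
    push_cast
    simp only [Units.val_mk0]
    ring
  obtain ⟨n, ⟨x, y, hn⟩, m, hm, s, hs, hsn⟩ := hex
  have h1 : w * u⁻¹ * s⁻¹ ∈ NN a := aux_NN_mul p ha _ _ hu (by simpa using hsn)
  have h2 : v * u⁻¹ ∈ NN a := by
    have hv' : (w * v⁻¹)⁻¹ ∉ NN a := fun h => hv ((Subgroup.inv_mem_iff _).1 h)
    have := aux_NN_mul p ha _ _ hu hv'
    convert this using 1
    rw [_root_.mul_inv_rev, inv_inv, mul_comm (w * u⁻¹), mul_assoc, inv_mul_cancel_left]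
  -- w = u * (s * k) = u n k + u m k
  have h3 : w * u⁻¹ * s⁻¹ * n ∈ NN a := Subgroup.mul_mem _ h1 ⟨x, y, hn⟩
  have h4 : w * u⁻¹ * s⁻¹ * m * (v * u⁻¹)⁻¹ ∈ NN a :=
    Subgroup.mul_mem _ (Subgroup.mul_mem _ h1 hm) (Subgroup.inv_mem _ h2)
  obtain ⟨x₁, y₁, e1⟩ := h3
  obtain ⟨x₂, y₂, e2⟩ := h4
  refine ⟨x₁, y₁, x₂, y₂, ?_⟩
  rw [← e1, ← e2]
  have := u.ne_zero
  have := v.ne_zero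
  have := s.ne_zero
  push_cast
  field_simp
  rw [hs]
end PartFour

section PartFive
open Matrix
variable {L : Type} [Field L]

def ct (τ : L →+* L) {m k : Type} (A : Matrix m k L) : Matrix k m L := (A.map τ)ᵀ

theorem ct_mul (τ : L →+* L) {m k l : Type} [Fintype k] (A : Matrix m k L) (B : Matrix k l L) :
    ct τ (A * B) = ct τ B * ct τ A := by
  simp [ct, Matrix.map_mul, Matrix.transpose_mul]

theorem ct_ct (τ : L →+* L) (hτ : ∀ x, τ (τ x) = x) {m k : Type} (A : Matrix m k L) :
    ct τ (ct τ A) = A := by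
  ext i k; simp [ct, hτ]

theorem ct_one (τ : L →+* L) {m : Type} [DecidableEq m] :
    ct τ (1 : Matrix m m L) = 1 := by
  simp [ct]

theorem ct_det (τ : L →+* L) {m : Type} [Fintype m] [DecidableEq m] (A : Matrix m m L) :
    (ct τ A).det = τ A.det := by
  rw [ct, Matrix.det_transpose, RingHom.map_det]; rfl

def Cg (τ : L →+* L) {n : ℕ} (A B : Matrix (Fin n) (Fin n) L) : Prop :=
  ∃ g : Matrix (Fin n) (Fin n) L, IsUnit g ∧ ct τ g * A * g = B

theorem Cg.trans {τ : L →+* L} {n : ℕ} {A B C : Matrix (Fin n) (Fin n) L}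
    (h1 : Cg τ A B) (h2 : Cg τ B C) : Cg τ A C := by
  obtain ⟨g, hg, rfl⟩ := h1
  obtain ⟨h, hh, rfl⟩ := h2
  exact ⟨g * h, hg.mul hh, by simp [ct_mul, Matrix.mul_assoc]⟩

theorem Cg.symm {τ : L →+* L} {n : ℕ} {A B : Matrix (Fin n) (Fin n) L}
    (h1 : Cg τ A B) : Cg τ B A := by
  obtain ⟨g, ⟨u, rfl⟩, rfl⟩ := h1
  refine ⟨((u⁻¹ : (Matrix (Fin n) (Fin n) L)ˣ) : Matrix (Fin n) (Fin n) L), Units.isUnit _, ?_⟩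
  have h2 : ct τ ((u⁻¹ : (Matrix (Fin n) (Fin n) L)ˣ) : Matrix (Fin n) (Fin n) L) * ct τ (u : Matrix (Fin n) (Fin n) L) = 1 := by
    rw [← ct_mul]; simp [ct_one]
  calc _ = (ct τ ((u⁻¹ : (Matrix (Fin n) (Fin n) L)ˣ) : Matrix (Fin n) (Fin n) L) * ct τ (u : Matrix (Fin n) (Fin n) L)) * A * (u * ((u⁻¹ : (Matrix (Fin n) (Fin n) L)ˣ) : Matrix (Fin n) (Fin n) L)) := by
        simp only [Matrix.mul_assoc]
    _ = A := by rw [h2]; simp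

theorem Cg.herm {τ : L →+* L} (hτ : ∀ x, τ (τ x) = x) {n : ℕ} {A B : Matrix (Fin n) (Fin n) L}
    (h1 : Cg τ A B) (hA : ct τ A = A) : ct τ B = B := by
  obtain ⟨g, hg, rfl⟩ := h1
  simp [ct_mul, ct_ct τ hτ, hA, Matrix.mul_assoc]

theorem Cg.det {τ : L →+* L} {n : ℕ} {A B : Matrix (Fin n) (Fin n) L}
    (h1 : Cg τ A B) : ∃ z, z ≠ 0 ∧ B.det = A.det * (τ z * z) := by
  obtain ⟨g, hg, rfl⟩ := h1
  refine ⟨g.det, ?_, ?_⟩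
  · exact ((Matrix.isUnit_iff_isUnit_det _).1 hg).ne_zero
  · rw [det_mul, det_mul, ct_det]; ring

def blk {n : ℕ} (t : L) (A : Matrix (Fin n) (Fin n) L) : Matrix (Fin (n+1)) (Fin (n+1)) L :=
  Matrix.of fun i k => Fin.cases (motive := fun _ => L) (Fin.cases (motive := fun _ => L) t (fun _ => 0) k)
    (fun i' => Fin.cases (motive := fun _ => L) 0 (fun k' => A i' k') k) i

@[simp] theorem blk00 {n : ℕ} (t : L) (A : Matrix (Fin n) (Fin n) L) : blk t A 0 0 = t := rfl
@[simp] theorem blk0s {n : ℕ} (t : L) (A : Matrix (Fin n) (Fin n) L) (k) : blk t A 0 (Fin.succ k) = 0 := rfl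
@[simp] theorem blks0 {n : ℕ} (t : L) (A : Matrix (Fin n) (Fin n) L) (k) : blk t A (Fin.succ k) 0 = 0 := rfl
@[simp] theorem blkss {n : ℕ} (t : L) (A : Matrix (Fin n) (Fin n) L) (i k) :
    blk t A (Fin.succ i) (Fin.succ k) = A i k := rfl

theorem blk_mul {n : ℕ} (s t : L) (A B : Matrix (Fin n) (Fin n) L) :
    blk s A * blk t B = blk (s * t) (A * B) := by
  ext i k
  refine Fin.cases ?_ (fun i => ?_) i <;> refine Fin.cases ?_ (fun k => ?_) k <;>
    simp [mul_apply, Fin.sum_univ_succ]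

theorem blk_one {n : ℕ} : blk (1 : L) (1 : Matrix (Fin n) (Fin n) L) = 1 := by
  ext i k
  refine Fin.cases ?_ (fun i => ?_) i <;> refine Fin.cases ?_ (fun k => ?_) k <;>
    simp [Matrix.one_apply, Fin.succ_ne_zero, (Fin.succ_ne_zero _).symm]

theorem ct_blk (τ : L →+* L) {n : ℕ} (t : L) (A : Matrix (Fin n) (Fin n) L) :
    ct τ (blk t A) = blk (τ t) (ct τ A) := by
  ext i k
  refine Fin.cases ?_ (fun i => ?_) i <;> refine Fin.cases ?_ (fun k => ?_) k <;>
    simp [ct]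

theorem blk_det {n : ℕ} (t : L) (A : Matrix (Fin n) (Fin n) L) : (blk t A).det = t * A.det := by
  rw [Matrix.det_succ_row_zero, Fin.sum_univ_succ]
  simp
  left; rfl

theorem Cg.blk {τ : L →+* L} {n : ℕ} {A B : Matrix (Fin n) (Fin n) L} (h : Cg τ A B) (t : L) :
    Cg τ (blk t A) (blk t B) := by
  obtain ⟨g, hg, rfl⟩ := h
  refine ⟨_root_.blk 1 g, ?_, ?_⟩
  · rw [Matrix.isUnit_iff_isUnit_det, blk_det, one_mul]
    exact (Matrix.isUnit_iff_isUnit_det _).1 hg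
  · simp [ct_blk, blk_mul]

/-- value of the form -/
def hf (τ : L →+* L) {n : ℕ} (A : Matrix (Fin n) (Fin n) L) (v : Fin n → L) : L :=
  ∑ i, ∑ k, τ (v i) * A i k * v k

theorem hf_col (τ : L →+* L) {n : ℕ} (A g : Matrix (Fin n) (Fin n) L) (l : Fin n) :
    (ct τ g * A * g) l l = hf τ A (fun i => g i l) := by
  simp only [mul_apply, hf, ct, Finset.sum_mul, transpose_apply, map_apply]
  rw [Finset.sum_comm]

theorem exists_col {n : ℕ} (v : Fin (n+1) → L) (hv : v ≠ 0) :
    ∃ g : Matrix (Fin (n+1)) (Fin (n+1)) L, IsUnit g ∧ ∀ i, g i 0 = v i := by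
  obtain ⟨i0, hi⟩ := Function.ne_iff.1 hv
  refine ⟨(updateCol 1 i0 v).submatrix id (Equiv.swap 0 i0), ?_, ?_⟩
  · rw [Matrix.isUnit_iff_isUnit_det, Matrix.det_permute', ← cramer_apply, cramer_one]
    refine IsUnit.mul ?_ (IsUnit.mk0 _ hi)
    rcases Int.units_eq_one_or (Equiv.Perm.sign (Equiv.swap 0 i0)) with h | h <;> simp [h]
  · intro i; simp

theorem split_off (τ : L →+* L) (hτ : ∀ x, τ (τ x) = x) {n : ℕ}
    (A : Matrix (Fin (n+1)) (Fin (n+1)) L) (hA : ct τ A = A) (v : Fin (n+1) → L)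
    (t : L) (ht : t ≠ 0) (hv : hf τ A v = t) : ∃ A', Cg τ A (blk t A') ∧ ct τ A' = A' := by
  have hv0 : v ≠ 0 := by
    rintro rfl; apply ht; rw [← hv]; simp [hf]
  obtain ⟨g, hg, hgv⟩ := exists_col v hv0
  obtain ⟨B, hB⟩ : ∃ B, B = ct τ g * A * g := ⟨_, rfl⟩
  have hAB : Cg τ A B := ⟨g, hg, hB.symm⟩
  have hBh := hAB.herm hτ hA
  have hB0 : B 0 0 = t := by
    rw [hB, hf_col, ← hv]; congr 1; ext i; exact hgv i
  have hent : ∀ i k, τ (B i k) = B k i := fun i k => by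
    conv_rhs => rw [← hBh]
    rfl
  let h : Matrix (Fin (n+1)) (Fin (n+1)) L :=
    of fun i k => Fin.cases (motive := fun _ => L) (Fin.cases (motive := fun _ => L) 1 (fun k' => - B 0 k'.succ / t) k)
      (fun i' => (1 : Matrix (Fin (n+1)) (Fin (n+1)) L) i'.succ k) i
  have h0 : h 0 0 = 1 := rfl
  have h1 : ∀ k : Fin n, h 0 k.succ = - B 0 k.succ / t := fun k => rfl
  have h2 : ∀ (i : Fin n) k, h i.succ k = (1 : Matrix (Fin (n+1)) (Fin (n+1)) L) i.succ k := fun i k => rfl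
  have hu : IsUnit h := by
    rw [Matrix.isUnit_iff_isUnit_det, Matrix.det_of_upperTriangular]
    · rw [Fin.prod_univ_succ]; simp [h0, h2]
    · intro i k hik
      induction i using Fin.cases with
      | zero => simp at hik
      | succ i => 
        rw [h2, Matrix.one_apply_ne]; rintro rfl; simp at hik
  obtain ⟨C, hC⟩ : ∃ C, C = ct τ h * B * h := ⟨_, rfl⟩
  have hBC : Cg τ B C := ⟨h, hu, hC.symm⟩
  have hCh := hBC.herm hτ hBh
  have hcent : ∀ i k, τ (C i k) = C k i := fun i k => by
    conv_rhs => rw [← hCh]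
    rfl
  have hone : ∀ (i k : Fin n), (1 : Matrix (Fin (n+1)) (Fin (n+1)) L) i.succ k.succ = if i = k then 1 else 0 := by
    intro i k; simp [Matrix.one_apply]
  have hone' : ∀ (i : Fin n), (1 : Matrix (Fin (n+1)) (Fin (n+1)) L) i.succ 0 = 0 := by
    intro i; simp [Matrix.one_apply]
  have hC00 : C 0 0 = t := by
    rw [hC]
    simp [mul_apply, Fin.sum_univ_succ, ct, h0, h2, hone', hB0]
  have hC0s : ∀ k : Fin n, C 0 k.succ = 0 := by
    intro k
    rw [hC]
    simp [mul_apply, Fin.sum_univ_succ, ct, h0, h2, h1, hone, hone', hB0]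
    field_simp
    ring
  have hCs0 : ∀ k : Fin n, C k.succ 0 = 0 := by
    intro k
    rw [← hcent, hC0s, map_zero]
  refine ⟨C.submatrix Fin.succ Fin.succ, ?_, ?_⟩
  · convert hAB.trans hBC using 1
    ext i k
    refine Fin.cases ?_ (fun i => ?_) i <;> refine Fin.cases ?_ (fun k => ?_) k <;>
      simp [hC00, hC0s, hCs0]
  · ext i k; simp [ct, hcent]

theorem exists_hf_ne (τ : L →+* L) (h2 : (2 : L) ≠ 0) {n : ℕ}
    (A : Matrix (Fin n) (Fin n) L) (hA : ct τ A = A) (hA0 : A ≠ 0) :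
    ∃ v, hf τ A v ≠ 0 := by
  have hent : ∀ i k, τ (A i k) = A k i := fun i k => by
    conv_rhs => rw [← hA]
    rfl
  by_contra! H
  have hd : ∀ i, A i i = 0 := by
    intro i
    have := H (Pi.single i 1)
    simpa [hf, Pi.single_apply, apply_ite τ] using this
  apply hA0
  ext i k
  by_contra hik
  simp only [Matrix.zero_apply] at hik
  have := H (Pi.single i 1 + Pi.single k (A i k)⁻¹)
  simp [hf, Pi.single_apply, apply_ite τ, add_mul, mul_add, Finset.sum_add_distrib, hd, hent] at this
  have hki : A k i ≠ 0 := by rw [← hent]; simpa using hik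
  rw [mul_inv_cancel₀ hik, inv_mul_cancel₀ hki] at this
  apply h2; rw [← this]; norm_num

theorem hf_blk (τ : L →+* L) {n : ℕ} (t : L) (A : Matrix (Fin n) (Fin n) L) (x y : L) (w : Fin n → L) :
    hf τ (blk t A) (Fin.cons x (fun i => y * w i)) = τ x * t * x + τ y * hf τ A w * y := by
  rw [hf]
  simp only [Fin.sum_univ_succ, Fin.cons_zero, Fin.cons_succ, blk00, blk0s, blks0, blkss]
  simp only [mul_zero, zero_mul, Finset.sum_const_zero, add_zero, zero_add]
  congr 1
  rw [hf, Finset.mul_sum, Finset.sum_mul]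
  refine Finset.sum_congr rfl fun i _ => ?_
  rw [Finset.mul_sum, Finset.sum_mul]
  refine Finset.sum_congr rfl fun k _ => ?_
  rw [map_mul]; ring

theorem herm_cong (τ : L →+* L) (hτ : ∀ x, τ (τ x) = x) (h2 : (2 : L) ≠ 0)
    (hU : ∀ a b, τ a = a → τ b = b → a ≠ 0 → b ≠ 0 → ∃ x y, τ x * a * x + τ y * b * y = 1) (n : ℕ) :
    ∀ (A B : Matrix (Fin (n+1)) (Fin (n+1)) L) (hA : ct τ A = A) (hB : ct τ B = B)
      (hA0 : A.det ≠ 0) (hB0 : B.det ≠ 0) (z : L) (hz : B.det = A.det * (τ z * z)), Cg τ A B := by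
  induction n with
  | zero =>
    intro A B hA hB hA0 hB0 z hz
    refine ⟨of fun _ _ => z, ?_, ?_⟩
    · rw [Matrix.isUnit_iff_isUnit_det]
      simp
      rintro rfl; apply hB0; rw [hz]; simp
    · ext i k
      simp at hz
      obtain rfl : i = 0 := by omega
      obtain rfl : k = 0 := by omega
      simp [mul_apply, ct, hz]; ring
  | succ n ih =>
    have key : ∀ (A : Matrix (Fin (n+1+1)) (Fin (n+1+1)) L), ct τ A = A → A.det ≠ 0 →
        ∃ A', Cg τ A (blk 1 A') ∧ ct τ A' = A' := by
      intro A hA hA0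
      have ne : ∀ m (M : Matrix (Fin (m+1)) (Fin (m+1)) L), M.det ≠ 0 → M ≠ 0 := by
        rintro m M h rfl; apply h; simp
      obtain ⟨v, hv⟩ := exists_hf_ne τ h2 A hA (ne _ _ hA0)
      obtain ⟨A', hc, hA'⟩ := split_off τ hτ A hA v _ hv rfl
      obtain ⟨z, hz, hd⟩ := hc.det
      have hA'0 : A'.det ≠ 0 := by
        intro h; rw [blk_det, h] at hd
        have : τ z ≠ 0 := by simpa using hz
        simp_all
      obtain ⟨w, hw⟩ := exists_hf_ne τ h2 A' hA' (ne _ _ hA'0)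
      have sa : ∀ m (M : Matrix (Fin m) (Fin m) L) v, ct τ M = M → τ (hf τ M v) = hf τ M v := by
        intro m M v hM
        have hent : ∀ i k, τ (M i k) = M k i := fun i k => by
          conv_rhs => rw [← hM]
          rfl
        simp only [hf, map_sum, map_mul, hτ, hent]
        rw [Finset.sum_comm]
        refine Finset.sum_congr rfl fun i _ => ?_
        refine Finset.sum_congr rfl fun k _ => ?_
        ring
      obtain ⟨x, y, hxy⟩ := hU _ _ (sa _ _ _ hA) (sa _ _ _ hA') hv hw
      have h1 : hf τ (blk (hf τ A v) A') (Fin.cons x (fun i => y * w i)) = 1 := by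
        rw [← hxy, hf_blk]
      obtain ⟨A'', hc2, hA''⟩ := split_off τ hτ _ (hc.herm hτ hA) _ 1 one_ne_zero h1
      exact ⟨A'', hc.trans hc2, hA''⟩
    intro A B hA hB hA0 hB0 z hz
    obtain ⟨A', hAc, hA'⟩ := key A hA hA0
    obtain ⟨B', hBc, hB'⟩ := key B hB hB0
    obtain ⟨u, hu, hud⟩ := hAc.det
    obtain ⟨v, hv, hvd⟩ := hBc.det
    rw [blk_det, one_mul] at hud hvd
    have hu' : τ u ≠ 0 := by simpa using hu
    have hv' : τ v ≠ 0 := by simpa using hv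
    refine (hAc.trans ((ih A' B' hA' hB' ?_ ?_ (z * v / u) ?_).blk 1)).trans hBc.symm
    · rw [hud]; exact mul_ne_zero hA0 (mul_ne_zero hu' hu)
    · rw [hvd]; exact mul_ne_zero hB0 (mul_ne_zero hv' hv)
    · rw [hud, hvd, hz, map_div₀, map_mul]; field_simp
end PartFive

section PartSix
open Matrix
variable {p : ℕ} [Fact p.Prime] {L : Type} [Field L] [Algebra ℚ_[p] L]

noncomputable def fixI (τ : L →ₐ[ℚ_[p]] L) : IntermediateField ℚ_[p] L :=
  { AlgHom.equalizer τ (AlgHom.id ℚ_[p] L) with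
    inv_mem' := by
      intro x hx
      change τ x = x at hx
      change τ x⁻¹ = x⁻¹
      rw [map_inv₀, hx] }

theorem mem_fixI (τ : L →ₐ[ℚ_[p]] L) (x : L) : x ∈ fixI τ ↔ τ x = x := Iff.rfl

theorem two_ne (p : ℕ) [Fact p.Prime] [Algebra ℚ_[p] L] : (2 : L) ≠ 0 := by
  haveI : CharZero L := charZero_of_injective_algebraMap (algebraMap ℚ_[p] L).injective
  exact two_ne_zero

theorem exists_delta (τ : L →ₐ[ℚ_[p]] L) (hτ : ∀ x, τ (τ x) = x) (h1 : ∃ x, τ x ≠ x) :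
    ∃ δ : L, δ ≠ 0 ∧ τ δ = - δ := by
  obtain ⟨x, hx⟩ := h1
  refine ⟨x - τ x, ?_, ?_⟩
  · rw [sub_ne_zero]; exact hx.symm
  · rw [map_sub, hτ]; ring

theorem nonsq (τ : L →ₐ[ℚ_[p]] L) (δ : L) (h0 : δ ≠ 0) (hδ : τ δ = - δ) (r : L) (hr : τ r = r) :
    r ^ 2 ≠ δ ^ 2 := by
  intro h
  have h2 := two_ne (L := L) p
  have : τ δ = δ := by
    rcases sq_eq_sq_iff_eq_or_eq_neg.1 h with h | h
    · rw [← h, hr]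
    · have : δ = - r := by rw [h]; ring
      rw [this, map_neg, hr]
  rw [hδ] at this
  have h3 : 2 * δ = 0 := by linear_combination - this
  simp_all

theorem nm_iff (τ : L →ₐ[ℚ_[p]] L) (hτ : ∀ x, τ (τ x) = x) (δ : L) (h0 : δ ≠ 0) (hδ : τ δ = - δ)
    (a : fixI τ) (ha : (a : L) = δ ^ 2) (c : (fixI τ)ˣ) :
    c ∈ NN a ↔ ∃ z : L, ((c : fixI τ) : L) = τ z * z := by
  have h2 := two_ne (L := L) p
  constructor
  · rintro ⟨x, y, h⟩
    refine ⟨x + y * δ, ?_⟩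
    rw [h]
    have hx : τ x = x := x.2
    have hy : τ y = y := y.2
    push_cast
    rw [map_add, map_mul, hx, hy, hδ, ha]; ring
  · rintro ⟨z, hz⟩
    refine ⟨⟨(z + τ z) / 2, ?_⟩, ⟨(z - τ z) / (2 * δ), ?_⟩, ?_⟩
    · rw [mem_fixI, map_div₀, map_add, hτ, map_ofNat]; ring
    · rw [mem_fixI, map_div₀, map_sub, map_mul, hτ, map_ofNat, hδ]; field_simp; ring
    · apply Subtype.ext
      push_cast
      rw [hz, ha]; field_simp; ring

variable [FiniteDimensional ℚ_[p] L]

theorem fix_setup (τ : L →ₐ[ℚ_[p]] L) (hτ : ∀ x, τ (τ x) = x) (h1 : ∃ x, τ x ≠ x) :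
    ∃ (a : fixI τ) (ha : ∀ r : fixI τ, r ^ 2 ≠ a),
      ∀ c : (fixI τ)ˣ, c ∈ NN a ↔ ∃ z : L, ((c : fixI τ) : L) = τ z * z := by
  obtain ⟨δ, h0, hδ⟩ := exists_delta τ hτ h1
  refine ⟨⟨δ ^ 2, ?_⟩, ?_, ?_⟩
  · rw [mem_fixI, map_pow, hδ]; ring
  · intro r hr
    exact nonsq τ δ h0 hδ r r.2 (congrArg Subtype.val hr)
  · exact nm_iff τ hτ δ h0 hδ _ rfl

theorem nm_mul (τ : L →ₐ[ℚ_[p]] L) (hτ : ∀ x, τ (τ x) = x) (h1 : ∃ x, τ x ≠ x)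
    (c d : L) (hc : τ c = c) (hd : τ d = d) (hc0 : c ≠ 0) (hd0 : d ≠ 0)
    (hcn : ¬ ∃ z, c = τ z * z) (hdn : ¬ ∃ z, d = τ z * z) : ∃ z, c * d = τ z * z := by
  obtain ⟨a, ha, H⟩ := fix_setup τ hτ h1
  have hc' : (⟨c, hc⟩ : fixI τ) ≠ 0 := fun h => hc0 (congrArg Subtype.val h)
  have hd' : (⟨d, hd⟩ : fixI τ) ≠ 0 := fun h => hd0 (congrArg Subtype.val h)
  have := aux_NN_mul p ha (Units.mk0 _ hc') (Units.mk0 _ hd') (by rw [H]; exact hcn) (by rw [H]; exact hdn)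
  rw [H] at this
  exact this

theorem nm_exists (τ : L →ₐ[ℚ_[p]] L) (hτ : ∀ x, τ (τ x) = x) (h1 : ∃ x, τ x ≠ x) :
    ∃ c, τ c = c ∧ c ≠ 0 ∧ ¬ ∃ z, c = τ z * z := by
  obtain ⟨a, ha, H⟩ := fix_setup τ hτ h1
  obtain ⟨c, hc⟩ := aux_NN_exists p ha
  rw [H] at hc
  exact ⟨c, (c : fixI τ).2, fun h => c.ne_zero (Subtype.ext h), hc⟩

theorem nm_univ (τ : L →ₐ[ℚ_[p]] L) (hτ : ∀ x, τ (τ x) = x) (h1 : ∃ x, τ x ≠ x)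
    (u v : L) (hu : τ u = u) (hv : τ v = v) (hu0 : u ≠ 0) (hv0 : v ≠ 0) :
    ∃ x y, τ x * u * x + τ y * v * y = 1 := by
  obtain ⟨δ, h0, hδ⟩ := exists_delta τ hτ h1
  have ha : δ ^ 2 ∈ fixI τ := by rw [mem_fixI, map_pow, hδ]; ring
  have hns : ∀ r : fixI τ, r ^ 2 ≠ ⟨δ ^ 2, ha⟩ := by
    intro r hr
    exact nonsq τ δ h0 hδ r r.2 (congrArg Subtype.val hr)
  have hc' : (⟨u, hu⟩ : fixI τ) ≠ 0 := fun h => hu0 (congrArg Subtype.val h)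
  have hd' : (⟨v, hv⟩ : fixI τ) ≠ 0 := fun h => hv0 (congrArg Subtype.val h)
  obtain ⟨x₁, y₁, x₂, y₂, h⟩ := aux_univ p _ hns (Units.mk0 _ hc') (Units.mk0 _ hd') 1
  refine ⟨x₁ + y₁ * δ, x₂ + y₂ * δ, ?_⟩
  have := congrArg (Subtype.val) h
  push_cast at this
  have e1 : τ x₁ = x₁ := x₁.2
  have e2 : τ x₂ = x₂ := x₂.2
  have e3 : τ y₁ = y₁ := y₁.2
  have e4 : τ y₂ = y₂ := y₂.2
  simp only [Units.val_mk0] at this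
  rw [map_add, map_add, map_mul, map_mul, e1, e2, e3, e4, hδ]
  linear_combination this

theorem herm_cong_p (τ : L →ₐ[ℚ_[p]] L) (hτ : ∀ x, τ (τ x) = x) (h1 : ∃ x, τ x ≠ x) {n : ℕ}
    (hn : 1 ≤ n) (A B : Matrix (Fin n) (Fin n) L) (hA : ct τ.toRingHom A = A) (hB : ct τ.toRingHom B = B)
      (hA0 : A.det ≠ 0) (hB0 : B.det ≠ 0) (z : L) (hz : B.det = A.det * (τ z * z)) :
      Cg τ.toRingHom A B := by
  obtain ⟨n, rfl⟩ := Nat.exists_eq_add_of_le' hn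
  exact herm_cong τ.toRingHom hτ (two_ne p) (nm_univ τ hτ h1) n A B hA hB hA0 hB0 z hz

end PartSix

section PartSeven
open Matrix
variable {p : ℕ} [Fact p.Prime] {L : Type} [Field L] [Algebra ℚ_[p] L]

structure TwoInv (σ τ : L →ₐ[ℚ_[p]] L) : Prop where
  hσ : ∀ x, σ (σ x) = x
  hτ : ∀ x, τ (τ x) = x
  hc : ∀ x, σ (τ x) = τ (σ x)
  hσ1 : ∃ x, σ x ≠ x
  hτ1 : ∃ x, τ x ≠ x
  hστ : ∃ x, σ x ≠ τ x

theorem TwoInv.elt {σ τ : L →ₐ[ℚ_[p]] L} (H : TwoInv σ τ) (s : L) (hs : s = 1 ∨ s = -1) :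
    ∃ δ : L, δ ≠ 0 ∧ τ δ = - δ ∧ σ δ = s * δ := by
  have h2 := two_ne (L := L) p
  by_contra! hno
  have hss : s * s = 1 := by rcases hs with rfl | rfl <;> norm_num
  have hσs : σ s = s := by rcases hs with rfl | rfl <;> simp
  have hτs : τ s = s := by rcases hs with rfl | rfl <;> simp
  have hV : ∀ v, τ v = - v → σ v = - s * v := by
    intro v hv
    by_contra hne
    refine hno (v + s * σ v) ?_ ?_ ?_
    · intro h
      apply hne
      linear_combination s * h - σ v * hss
    · rw [map_add, map_mul, hτs, ← H.hc, hv, map_neg]; ring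
    · rw [map_add, map_mul, hσs, H.hσ]; linear_combination (- σ v) * hss
  obtain ⟨δ, h0, hδ⟩ := exists_delta τ H.hτ H.hτ1
  have hs0 : s ≠ 0 := by rintro rfl; simp at hss
  have hfix : ∀ e, τ e = e → σ e = e := by
    intro e he
    have h1 := hV δ hδ
    have h2 := hV (δ * e) (by rw [map_mul, he, hδ]; ring)
    rw [map_mul, h1] at h2
    have h3 : (- s * δ) * (σ e - e) = 0 := by linear_combination h2
    rcases mul_eq_zero.1 h3 with h | h
    · simp_all
    · exact sub_eq_zero.1 h
  have hall : ∀ x, 2 * σ x = (x + τ x) - s * (x - τ x) := by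
    intro x
    have e1 := hfix (x + τ x) (by rw [map_add, H.hτ]; ring)
    have e2 := hV (x - τ x) (by rw [map_sub, H.hτ]; ring)
    rw [map_add] at e1
    rw [map_sub] at e2
    linear_combination e1 + e2
  rcases hs with rfl | rfl
  · obtain ⟨x, hx⟩ := H.hστ
    apply hx
    apply mul_left_cancel₀ h2
    rw [hall]; ring
  · obtain ⟨x, hx⟩ := H.hσ1
    apply hx
    apply mul_left_cancel₀ h2
    rw [hall]; ring

theorem h90 {σ τ : L →ₐ[ℚ_[p]] L} (H : TwoInv σ τ) {n : ℕ} (x : Matrix (Fin n) (Fin n) L)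
    (hx : x * x.map σ = 1) : ∃ g, IsUnit g ∧ x * g.map σ = g := by
  have h2 := two_ne (L := L) p
  haveI : CharZero L := charZero_of_injective_algebraMap (algebraMap ℚ_[p] L).injective
  obtain ⟨κ, h0, -, hκ⟩ := H.elt (-1) (Or.inr rfl)
  let M : Matrix (Fin n) (Fin n) (Polynomial L) :=
    (Polynomial.X : Polynomial L) • (1 + x).map Polynomial.C + (κ • (1 - x)).map Polynomial.C
  have hM : ∀ t : L, M.det.eval t = (t • (1 + x) + κ • (1 - x)).det := by
    intro t
    rw [← Polynomial.coe_evalRingHom, RingHom.map_det]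
    congr 1
    ext i k
    simp [M]; ring
  have hne : M.det ≠ 0 := by
    intro h
    have := hM κ
    rw [h] at this
    have e : κ • (1 + x) + κ • (1 - x) = (κ * 2) • (1 : Matrix (Fin n) (Fin n) L) := by
      ext i k; simp; ring
    rw [e, det_smul] at this
    simp at this
    exact pow_ne_zero n (mul_ne_zero h0 h2) this.symm
  have : ∃ t : ℕ, M.det.eval (t : L) ≠ 0 := by
    by_contra! hh
    apply hne
    apply Polynomial.eq_zero_of_infinite_isRoot
    refine Set.Infinite.mono ?_ (Set.infinite_range_of_injective (Nat.cast_injective (R := L)))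
    rintro _ ⟨t, rfl⟩
    exact hh t
  obtain ⟨t, ht⟩ := this
  rw [hM] at ht
  refine ⟨_, (Matrix.isUnit_iff_isUnit_det _).2 (IsUnit.mk0 _ ht), ?_⟩
  have e : ((t : L) • (1 + x) + κ • (1 - x)).map σ = (t : L) • (1 + x.map σ) - κ • (1 - x.map σ) := by
    ext i k
    have : σ ((1 : Matrix (Fin n) (Fin n) L) i k) = (1 : Matrix (Fin n) (Fin n) L) i k := by
      rw [Matrix.one_apply]; split_ifs <;> simp
    simp [hκ, this]
    ring
  rw [e, Matrix.mul_sub, Matrix.mul_smul, Matrix.mul_smul, Matrix.mul_add, Matrix.mul_sub, hx, Matrix.mul_one]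
  ext i k
  simp
  ring

variable [FiniteDimensional ℚ_[p] L]

theorem TwoInv.norm {σ τ : L →ₐ[ℚ_[p]] L} (H : TwoInv σ τ) (c : L) (hc0 : c ≠ 0)
    (h1 : σ c = c) (h2 : τ c = c) : ∃ z, c = τ z * z := by
  obtain ⟨δ, hδ0, hτδ, hσδ⟩ := H.elt 1 (Or.inl rfl)
  obtain ⟨κ, hκ0, hτκ, hσκ⟩ := H.elt (-1) (Or.inr rfl)
  rw [one_mul] at hσδ
  rw [neg_one_mul] at hσκ
  let F₀ : IntermediateField ℚ_[p] L := fixI σ ⊓ fixI τ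
  have mem : ∀ x, x ∈ F₀ ↔ σ x = x ∧ τ x = x := fun x => Iff.rfl
  have ha : δ ^ 2 ∈ F₀ := by rw [mem, map_pow, map_pow, hτδ, hσδ]; simp
  have hb : κ ^ 2 ∈ F₀ := by rw [mem, map_pow, map_pow, hτκ, hσκ]; simp
  have ha0 : (⟨_, ha⟩ : F₀) ≠ 0 := fun h => hδ0 (by simpa using congrArg Subtype.val h)
  have hb0 : (⟨_, hb⟩ : F₀) ≠ 0 := fun h => hκ0 (by simpa using congrArg Subtype.val h)
  have hc0' : (⟨c, h1, h2⟩ : F₀) ≠ 0 := fun h => hc0 (by simpa using congrArg Subtype.val h)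
  obtain ⟨n, ⟨x, y, hn⟩, m, ⟨x', y', hm⟩, h⟩ := aux_NN_prod p (Units.mk0 _ ha0) (Units.mk0 _ hb0)
    (fun r hr => nonsq τ δ hδ0 hτδ r r.2.2 (congrArg Subtype.val hr))
    (fun r hr => nonsq τ κ hκ0 hτκ r r.2.2 (congrArg Subtype.val hr))
    (fun r hr => nonsq σ (δ * κ) (mul_ne_zero hδ0 hκ0) (by rw [map_mul, hσδ, hσκ]; ring) r r.2.1
      (by
        have := congrArg Subtype.val hr
        rw [mul_pow]
        exact this)) (Units.mk0 _ hc0')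
  have h' : (⟨c, h1, h2⟩ : F₀) = n * m := congrArg Units.val h
  rw [hn, hm] at h'
  have h'' := congrArg Subtype.val h'
  push_cast at h''
  simp only [Units.val_mk0] at h''
  refine ⟨(x + y * δ) * (x' + y' * κ), ?_⟩
  have e1 : τ x = x := x.2.2
  have e2 : τ y = y := y.2.2
  have e3 : τ x' = x' := x'.2.2
  have e4 : τ y' = y' := y'.2.2
  rw [map_mul, map_add, map_add, map_mul, map_mul, e1, e2, e3, e4, hτδ, hτκ, h'']
  ring

end PartSeven

section PartEight
open Matrix
variable {p : ℕ} [Fact p.Prime] {L : Type} [Field L] [Algebra ℚ_[p] L]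

noncomputable def TwoInv.res {σ τ : L →ₐ[ℚ_[p]] L} (H : TwoInv σ τ) : fixI σ →ₐ[ℚ_[p]] fixI σ :=
  AlgHom.codRestrict (τ.comp (fixI σ).val) (fixI σ).toSubalgebra (fun x => by
    have hx : σ x = x := x.2
    change σ (τ x) = τ x
    rw [H.hc, hx])

theorem TwoInv.res_coe {σ τ : L →ₐ[ℚ_[p]] L} (H : TwoInv σ τ) (x : fixI σ) :
    (H.res x : L) = τ x := rfl

theorem TwoInv.res2 {σ τ : L →ₐ[ℚ_[p]] L} (H : TwoInv σ τ) (x : fixI σ) :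
    H.res (H.res x) = x := Subtype.ext (by rw [H.res_coe, H.res_coe, H.hτ])

theorem TwoInv.res1 {σ τ : L →ₐ[ℚ_[p]] L} (H : TwoInv σ τ) : ∃ x, H.res x ≠ x := by
  obtain ⟨δ, h0, h1, h2⟩ := H.elt 1 (Or.inl rfl)
  rw [one_mul] at h2
  refine ⟨⟨δ, h2⟩, fun h => ?_⟩
  have h3 := congrArg Subtype.val h
  rw [H.res_coe] at h3
  change τ δ = δ at h3
  rw [h1] at h3
  have h4 : 2 * δ = 0 := by linear_combination - h3
  have := two_ne (L := L) p
  simp_all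

variable [FiniteDimensional ℚ_[p] L]

theorem TwoInv.nm_mul {σ τ : L →ₐ[ℚ_[p]] L} (H : TwoInv σ τ)
    (c d : L) (hc : σ c = c ∧ τ c = c) (hd : σ d = d ∧ τ d = d) (hc0 : c ≠ 0) (hd0 : d ≠ 0)
    (hcn : ¬ ∃ z, σ z = z ∧ c = τ z * z) (hdn : ¬ ∃ z, σ z = z ∧ d = τ z * z) :
    ∃ z, σ z = z ∧ c * d = τ z * z := by
  obtain ⟨z, hz⟩ := _root_.nm_mul H.res H.res2 H.res1 ⟨c, hc.1⟩ ⟨d, hd.1⟩ (Subtype.ext hc.2) (Subtype.ext hd.2)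
    (fun h => hc0 (congrArg Subtype.val h)) (fun h => hd0 (congrArg Subtype.val h))
    (fun ⟨z, hz⟩ => hcn ⟨z, z.2, congrArg Subtype.val hz⟩)
    (fun ⟨z, hz⟩ => hdn ⟨z, z.2, congrArg Subtype.val hz⟩)
  exact ⟨z, z.2, congrArg Subtype.val hz⟩

theorem TwoInv.nm_exists {σ τ : L →ₐ[ℚ_[p]] L} (H : TwoInv σ τ) :
    ∃ c, (σ c = c ∧ τ c = c) ∧ c ≠ 0 ∧ ¬ ∃ z, σ z = z ∧ c = τ z * z := by
  obtain ⟨c, h1, h2, h3⟩ := _root_.nm_exists H.res H.res2 H.res1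
  refine ⟨c, ⟨c.2, congrArg Subtype.val h1⟩, fun h => h2 (Subtype.ext h), ?_⟩
  rintro ⟨z, hz, h⟩
  exact h3 ⟨⟨z, hz⟩, Subtype.ext h⟩

theorem TwoInv.eta {σ τ : L →ₐ[ℚ_[p]] L} (H : TwoInv σ τ) (ε : L) (hε : ε = 1 ∨ ε = -1) :
    ∃ η, η ≠ 0 ∧ σ η = η ∧ τ η * ε = η := by
  rcases hε with rfl | rfl
  · exact ⟨1, by simp⟩
  · obtain ⟨δ, h0, h1, h2⟩ := H.elt 1 (Or.inl rfl)
    exact ⟨δ, h0, by simpa using h2, by rw [h1]; ring⟩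

theorem herm_eta {τ : L →ₐ[ℚ_[p]] L} {ε η : L} (hη : τ η * ε = η) {n : ℕ}
    {y : Matrix (Fin n) (Fin n) L} (hy : (y.map τ)ᵀ = ε • y) : ct τ.toRingHom (η • y) = η • y := by
  ext i k
  have := congrFun (congrFun hy i) k
  simp at this
  simp [ct, this]
  rw [← mul_assoc, hη]

theorem map_det' (σ : L →ₐ[ℚ_[p]] L) {n : ℕ} (y : Matrix (Fin n) (Fin n) L) :
    (y.map σ).det = σ y.det := by
  rw [AlgHom.map_det]; rfl

theorem TwoInv.ratio {σ τ : L →ₐ[ℚ_[p]] L} (H : TwoInv σ τ) (ε : L) (hε : ε = 1 ∨ ε = -1)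
    {n : ℕ} (y y' : Matrix (Fin n) (Fin n) L)
    (hσy : y.map σ = y) (hσy' : y'.map σ = y') (hτy : (y.map τ)ᵀ = ε • y) (hτy' : (y'.map τ)ᵀ = ε • y') :
    σ (y'.det / y.det) = y'.det / y.det ∧ τ (y'.det / y.det) = y'.det / y.det := by
  rw [map_div₀, map_div₀]
  constructor
  · rw [← map_det', ← map_det', hσy, hσy']
  · rw [← map_det', ← map_det', ← det_transpose, ← det_transpose (y.map τ), hτy, hτy', det_smul, det_smul,
      mul_div_mul_left]
    apply pow_ne_zero
    rcases hε with rfl | rfl <;> simp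

theorem TwoInv.part1 {σ τ : L →ₐ[ℚ_[p]] L} (H : TwoInv σ τ) (ε : L) (hε : ε = 1 ∨ ε = -1)
    {n : ℕ} (hn : 1 ≤ n) (y y' : Matrix (Fin n) (Fin n) L) (hy0 : y.det ≠ 0) (hy0' : y'.det ≠ 0)
    (hσy : y.map σ = y) (hσy' : y'.map σ = y') (hτy : (y.map τ)ᵀ = ε • y) (hτy' : (y'.map τ)ᵀ = ε • y') :
    ∃ g, IsUnit g ∧ (g.map τ)ᵀ * y * g = y' := by
  obtain ⟨η, hη0, hση, hτη⟩ := H.eta ε hε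
  obtain ⟨h1, h2⟩ := H.ratio ε hε y y' hσy hσy' hτy hτy'
  obtain ⟨z, hz⟩ := H.norm _ (div_ne_zero hy0' hy0) h1 h2
  have hp := pow_ne_zero n hη0
  obtain ⟨g, hg, h⟩ := herm_cong_p τ H.hτ H.hτ1 hn (η • y) (η • y') (herm_eta hτη hτy) (herm_eta hτη hτy')
    (by rw [det_smul, Fintype.card_fin]; exact mul_ne_zero hp hy0)
    (by rw [det_smul, Fintype.card_fin]; exact mul_ne_zero hp hy0') z
    (by rw [← hz, det_smul, det_smul]; field_simp)
  refine ⟨g, hg, ?_⟩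
  rw [Matrix.mul_smul, Matrix.smul_mul] at h
  exact smul_right_injective _ hη0 h

theorem TwoInv.part2 {σ τ : L →ₐ[ℚ_[p]] L} (H : TwoInv σ τ) (ε : L) (hε : ε = 1 ∨ ε = -1)
    {n : ℕ} (hn : 1 ≤ n) (y y' : Matrix (Fin n) (Fin n) L) (hy0 : y.det ≠ 0) (hy0' : y'.det ≠ 0)
    (hσy : y.map σ = y) (hσy' : y'.map σ = y') (hτy : (y.map τ)ᵀ = ε • y) (hτy' : (y'.map τ)ᵀ = ε • y')
    (z : L) (hσz : σ z = z) (hz : y'.det / y.det = τ z * z) :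
    ∃ g, IsUnit g ∧ g.map σ = g ∧ (g.map τ)ᵀ * y * g = y' := by
  obtain ⟨η, hη0, hση, hτη⟩ := H.eta ε hε
  have hp := pow_ne_zero n hη0
  have lift : ∀ M : Matrix (Fin n) (Fin n) L, M.map σ = M →
      ∃ M' : Matrix (Fin n) (Fin n) (fixI σ), M'.map (fixI σ).val = M := by
    intro M hM
    exact ⟨of fun i k => ⟨M i k, congrFun (congrFun hM i) k⟩, by ext i k; rfl⟩
  have inj : ∀ M N : Matrix (Fin n) (Fin n) (fixI σ), M.map (fixI σ).val = N.map (fixI σ).val → M = N := by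
    intro M N h
    ext i k
    exact congrFun (congrFun h i) k
  have hct : ∀ M : Matrix (Fin n) (Fin n) (fixI σ), (ct H.res.toRingHom M).map (fixI σ).val =
      ct τ.toRingHom (M.map (fixI σ).val) := by
    intro M; ext i k; rfl
  have hdet : ∀ M : Matrix (Fin n) (Fin n) (fixI σ), (fixI σ).val M.det = (M.map (fixI σ).val).det := by
    intro M; rw [AlgHom.map_det]; rfl
  have hsm : ∀ M : Matrix (Fin n) (Fin n) L, M.map σ = M → (η • M).map σ = η • M := by
    intro M hM
    ext i k
    have := congrFun (congrFun hM i) k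
    simp at this
    simp [hση, this]
  obtain ⟨A, hA⟩ := lift (η • y) (hsm _ hσy)
  obtain ⟨B, hB⟩ := lift (η • y') (hsm _ hσy')
  have hAd : (fixI σ).val A.det = η ^ n * y.det := by
    rw [hdet, hA, det_smul]; simp
  have hBd : (fixI σ).val B.det = η ^ n * y'.det := by
    rw [hdet, hB, det_smul]; simp
  obtain ⟨g, hg, h⟩ := herm_cong_p H.res H.res2 H.res1 hn A B
    (inj _ _ (by rw [hct, hA]; exact herm_eta hτη hτy)) (inj _ _ (by rw [hct, hB]; exact herm_eta hτη hτy'))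
    (by intro h; rw [h, map_zero] at hAd; exact mul_ne_zero hp hy0 hAd.symm)
    (by intro h; rw [h, map_zero] at hBd; exact mul_ne_zero hp hy0' hBd.symm)
    ⟨z, hσz⟩
    (by
      apply Subtype.ext
      refine hBd.trans (Eq.symm ((congrArg (fun w => w * (τ z * z)) hAd).trans ?_))
      change η ^ n * y.det * (τ z * z) = _
      rw [← hz]; field_simp)
  refine ⟨g.map (fixI σ).val, ?_, ?_, ?_⟩
  · rw [Matrix.isUnit_iff_isUnit_det] at hg ⊢
    rw [← hdet]
    exact hg.map _
  · ext i k
    exact (g i k).2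
  have h3 := congrArg (fun M => M.map (fixI σ).val) h
  simp only [Matrix.map_mul, hct, hA, hB] at h3
  rw [Matrix.mul_smul, Matrix.smul_mul] at h3
  exact smul_right_injective _ hη0 h3

end PartEight

section PartNine

theorem abs_orb {R : Type} [Ring R] (s : R →+* R) (T : R → R) (hT : ∀ a b, T (a * b) = T b * T a)
    (hT1 : T 1 = 1) (j x x' : R) (h g : Rˣ) (hh : x * s h = h) (hg : x' * s g = g)
    (he : T h * j * h = T g * j * g) :
    ∃ u : Rˣ, T u * j * u = j ∧ x' * s u = u * x := by
  refine ⟨g * h⁻¹, ?_, ?_⟩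
  · have h1 : T (h⁻¹ : Rˣ) * T h = 1 := by rw [← hT]; simp [hT1]
    push_cast
    rw [hT]
    calc _ = T (h⁻¹ : Rˣ) * (T g * j * g) * (h⁻¹ : Rˣ) := by simp only [mul_assoc]
      _ = (T (h⁻¹ : Rˣ) * T h) * j * (h * (h⁻¹ : Rˣ)) := by rw [← he]; simp only [mul_assoc]
      _ = j := by rw [h1]; simp
  · have h1 : s h * s (h⁻¹ : Rˣ) = 1 := by rw [← map_mul]; simp
    have h2 : ((h⁻¹ : Rˣ) : R) * x = s (h⁻¹ : Rˣ) := by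
      calc _ = ((h⁻¹ : Rˣ) : R) * (x * s h) * s (h⁻¹ : Rˣ) := by rw [mul_assoc, mul_assoc, h1, mul_one]
        _ = _ := by rw [hh]; simp
    push_cast
    rw [map_mul, ← mul_assoc, hg, mul_assoc, h2]

variable {p : ℕ} [Fact p.Prime] {L : Type} [Field L] [Algebra ℚ_[p] L]

theorem map_ct_comm {σ τ : L →ₐ[ℚ_[p]] L} (H : TwoInv σ τ) {n : ℕ} (j g : Matrix (Fin n) (Fin n) L)
    (hj : j.map σ = j) :
    ((g.map τ)ᵀ * j * g).map σ = ((g.map σ).map τ)ᵀ * j * (g.map σ) := by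
  rw [Matrix.map_mul, Matrix.map_mul, hj]
  congr 2
  ext i k
  simp [H.hc]

theorem isUnit_map (σ : L →ₐ[ℚ_[p]] L) {n : ℕ} {g : Matrix (Fin n) (Fin n) L} (hg : IsUnit g) :
    IsUnit (g.map σ) := hg.map σ.mapMatrix

theorem orb_of {σ τ : L →ₐ[ℚ_[p]] L} (H : TwoInv σ τ) {n : ℕ} (j x x' h g : Matrix (Fin n) (Fin n) L)
    (hh0 : IsUnit h) (hg0 : IsUnit g) (hh : x * h.map σ = h) (hg : x' * g.map σ = g)
    (he : (h.map τ)ᵀ * j * h = (g.map τ)ᵀ * j * g) : orbGj σ τ j x x' := by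
  obtain ⟨h, rfl⟩ := hh0
  obtain ⟨g, rfl⟩ := hg0
  obtain ⟨u, h1, h2⟩ := abs_orb (σ.mapMatrix (m := Fin n)).toRingHom (ct τ.toRingHom)
    (fun a b => ct_mul _ a b) (ct_one _) j x x' h g hh hg he
  refine ⟨u, ⟨u.isUnit, h1⟩, ?_⟩
  have h2' : x' * (u : Matrix (Fin n) (Fin n) L).map σ = u * x := h2
  rw [← h2', Matrix.mul_nonsing_inv_cancel_right]
  exact (Matrix.isUnit_iff_isUnit_det _).1 (isUnit_map σ u.isUnit)

theorem ct_cancel {τ : L →ₐ[ℚ_[p]] L} {n : ℕ} (A B h : Matrix (Fin n) (Fin n) L) (hh : IsUnit h)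
    (he : (h.map τ)ᵀ * A * h = (h.map τ)ᵀ * B * h) : A = B := by
  have h1 : IsUnit (h.map τ)ᵀ := by
    rw [Matrix.isUnit_iff_isUnit_det, det_transpose, ← Matrix.isUnit_iff_isUnit_det]
    exact isUnit_map τ hh
  exact h1.mul_left_cancel (hh.mul_right_cancel he)

theorem ct_mul' (τ : L →ₐ[ℚ_[p]] L) {n : ℕ} (A B j : Matrix (Fin n) (Fin n) L) :
    ((A * B).map τ)ᵀ * j * (A * B) = (B.map τ)ᵀ * ((A.map τ)ᵀ * j * A) * B := by
  rw [Matrix.map_mul, Matrix.transpose_mul]; simp only [Matrix.mul_assoc]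

variable [FiniteDimensional ℚ_[p] L]

theorem main_two {σ τ : L →ₐ[ℚ_[p]] L} (H : TwoInv σ τ) (ε : L) (hε : ε = 1 ∨ ε = -1)
    {n : ℕ} (hn : 1 ≤ n) (j : Matrix (Fin n) (Fin n) L) (hj0 : j.det ≠ 0) 
    (hσj : j.map σ = j) (hτj : (j.map τ)ᵀ = ε • j) :
    (∃ x₁ x₂, Xj ⇑σ ⇑τ j x₁ ∧ Xj ⇑σ ⇑τ j x₂ ∧ ¬ orbGj ⇑σ ⇑τ j x₁ x₂ ∧
      ∀ x, Xj ⇑σ ⇑τ j x → orbGj ⇑σ ⇑τ j x₁ x ∨ orbGj ⇑σ ⇑τ j x₂ x) := by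
  obtain ⟨η, hη0, hση, hτη⟩ := H.eta ε hε
  obtain ⟨c, hc, hc0, hcn⟩ := H.nm_exists
  have hεε : ε * ε = 1 := by rcases hε with rfl | rfl <;> simp
  have hτε : τ ε = ε := by rcases hε with rfl | rfl <;> simp
  -- the second hermitian matrix
  obtain ⟨y₂, hy0, hσy, hτy, hyd⟩ : ∃ y : Matrix (Fin n) (Fin n) L, y.det ≠ 0 ∧ y.map σ = y ∧
      (y.map τ)ᵀ = ε • y ∧ y.det = c * j.det := by
    have hp := pow_ne_zero n hη0
    let d : L := c * (η • j).det
    have hσd : σ d = d := by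
      simp only [d, map_mul, hc.1, det_smul, map_pow, hση]
      rw [← map_det', hσj]
    have hτd : τ d = d := by
      have h1 := ct_det τ.toRingHom (η • j)
      rw [herm_eta hτη hτj] at h1
      have h2 : τ (η • j).det = (η • j).det := h1.symm
      simp only [d, map_mul, hc.2, h2]
    have hηinv : τ η⁻¹ = ε * η⁻¹ := by
      rw [map_inv₀]
      have : τ η ≠ 0 := by simpa using hη0
      field_simp
      linear_combination - hτη
    let f : Fin n → L := Function.update 1 ⟨0, hn⟩ d
    have hσf : ∀ i, σ (f i) = f i := by
      intro i; by_cases h : i = ⟨0, hn⟩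
      · rw [h]; simp [f, hσd]
      · simp [f, Function.update_of_ne h]
    have hτf : ∀ i, τ (f i) = f i := by
      intro i; by_cases h : i = ⟨0, hn⟩
      · rw [h]; simp [f, hτd]
      · simp [f, Function.update_of_ne h]
    have hdet : (η⁻¹ • diagonal f).det = c * j.det := by
      rw [det_smul, det_diagonal]
      have : ∏ i, f i = d := by
        simp [f, Finset.prod_update_of_mem]
      rw [this]
      simp only [d, det_smul, Fintype.card_fin, inv_pow]
      field_simp
    refine ⟨η⁻¹ • diagonal f, ?_, ?_, ?_, hdet⟩
    · rw [hdet]; exact mul_ne_zero hc0 hj0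
    · ext i k
      by_cases h : i = k
      · subst h; simp [hση, hσf]
      · simp [h]
    · ext i k
      by_cases h : i = k
      · subst h
        rw [transpose_apply, map_apply, Matrix.smul_apply, smul_eq_mul, map_mul, hηinv, diagonal_apply_eq, hτf]
        simp [mul_assoc]
      · simp [h, Ne.symm h]
  obtain ⟨g, hg, hgy⟩ := H.part1 ε hε hn j y₂ hj0 hy0 hσj hσy hτj hτy
  have hgd : IsUnit (g.map σ).det := (Matrix.isUnit_iff_isUnit_det _).1 (isUnit_map σ hg)
  obtain ⟨x₂, hx₂⟩ : ∃ x, x * g.map σ = g := ⟨g * (g.map σ)⁻¹, Matrix.nonsing_inv_mul_cancel_right _ _ hgd⟩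
  have hinv : ∀ M : Matrix (Fin n) (Fin n) L, (M.map σ).map σ = M := by
    intro M; ext i k; simp [H.hσ]
  have hone : (1 : Matrix (Fin n) (Fin n) L).map σ = 1 := by simp
  have hone' : (1 : Matrix (Fin n) (Fin n) L).map τ = 1 := by simp
  refine ⟨1, x₂, ⟨⟨isUnit_one, by simp [hone']⟩, by simp [hone]⟩, ⟨⟨?_, ?_⟩, ?_⟩, ?_, ?_⟩
  · have : IsUnit (x₂ * g.map σ) := by rw [hx₂]; exact hg
    rw [Matrix.isUnit_iff_isUnit_det, det_mul] at this
    rw [Matrix.isUnit_iff_isUnit_det]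
    exact isUnit_of_mul_isUnit_left this
  · apply ct_cancel (τ := τ) _ _ (g.map σ) (isUnit_map σ hg)
    rw [← ct_mul', hx₂, hgy, ← map_ct_comm H j g hσj, hgy, hσy]
  · apply hg.mul_right_cancel
    have := congrArg (fun M => M.map σ) hx₂
    simp only [Matrix.map_mul, hinv] at this
    rw [Matrix.mul_assoc, this, hx₂, one_mul]
  · rintro ⟨u, ⟨hu, huj⟩, he⟩
    have hud : IsUnit (u.map σ).det := (Matrix.isUnit_iff_isUnit_det _).1 (isUnit_map σ hu)
    have h1 : x₂ * u.map σ = u := by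
      rw [he, mul_one, Matrix.nonsing_inv_mul_cancel_right _ _ hud]
    obtain ⟨k, rfl⟩ : ∃ k, g = u * k := ⟨u⁻¹ * g, by
      rw [Matrix.mul_nonsing_inv_cancel_left _ _ ((Matrix.isUnit_iff_isUnit_det _).1 hu)]⟩
    have hk : k.map σ = k := by
      apply hu.mul_left_cancel
      rw [← hx₂, Matrix.map_mul, ← Matrix.mul_assoc, h1]
    rw [ct_mul', huj] at hgy
    apply hcn
    refine ⟨k.det, ?_, ?_⟩
    · rw [← map_det', hk]
    · rw [← hgy, det_mul, det_mul, det_transpose, map_det'] at hyd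
      apply mul_right_cancel₀ hj0
      rw [← hyd]; ring
  · rintro x ⟨⟨hx0, hxj⟩, hxx⟩
    obtain ⟨h, hh, hhx⟩ := h90 H x hxx
    obtain ⟨y, hy⟩ : ∃ y, y = (h.map τ)ᵀ * j * h := ⟨_, rfl⟩
    have hhd : h.det ≠ 0 := ((Matrix.isUnit_iff_isUnit_det _).1 hh).ne_zero
    have hyd0 : y.det ≠ 0 := by
      rw [hy, det_mul, det_mul, det_transpose, map_det']
      exact mul_ne_zero (mul_ne_zero (by simpa using hhd) hj0) hhd
    have hσy' : y.map σ = y := by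
      rw [hy, map_ct_comm H j h hσj]
      conv_rhs => rw [← hhx, ct_mul', hxj]
    have hτy' : (y.map τ)ᵀ = ε • y := by
      rw [hy, Matrix.map_mul, Matrix.map_mul, transpose_mul, transpose_mul, hτj]
      have : (((h.map τ)ᵀ).map τ)ᵀ = h := by ext i k; simp [H.hτ]
      rw [this]; simp [Matrix.mul_assoc]
    have fin : ∀ (x' g' y' : Matrix (Fin n) (Fin n) L), IsUnit g' → x' * g'.map σ = g' → 
        (g'.map τ)ᵀ * j * g' = y' → y'.det ≠ 0 → y'.map σ = y' → (y'.map τ)ᵀ = ε • y' →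
        (∃ z, σ z = z ∧ y.det / y'.det = τ z * z) → orbGj ⇑σ ⇑τ j x' x := by
      rintro x' g' y' hg' hx' hgy' hy0' h1 h2 ⟨z, hz1, hz2⟩
      obtain ⟨k, hk0, hkσ, hk⟩ := H.part2 ε hε hn y' y hy0' hyd0 h1 hσy' h2 hτy' z hz1 hz2
      apply orb_of H j x' x (g' * k) h (hg'.mul hk0) hh ?_ hhx ?_
      · rw [Matrix.map_mul, hkσ, ← Matrix.mul_assoc, hx']
      · rw [ct_mul', hgy', hk, hy]
    by_cases hN : ∃ z, σ z = z ∧ y.det / j.det = τ z * z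
    · left
      exact fin 1 1 j isUnit_one (by simp [hone]) (by simp [hone']) hj0 hσj hτj hN
    · right
      refine fin x₂ g y₂ hg hx₂ hgy hy0 hσy hτy ?_
      obtain ⟨z, hz, hz2⟩ := H.nm_mul _ c (H.ratio ε hε j y hσj hσy' hτj hτy') hc (div_ne_zero hyd0 hj0) hc0 hN hcn
      refine ⟨z / c, ?_, ?_⟩
      · rw [map_div₀, hz, hc.1]
      · rw [map_div₀, hc.2, hyd]
        field_simp
        field_simp at hz2
        linear_combination hz2
end PartNine

/-- In the unitary case (`E'` biquadratic over the base, `σ, τ` the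
commuting Galois involutions with respective fixed fields `F'` and `E`), one has
`Y_n(F) ⊆ j ⋆ GL_n(E')`, and `X^j` consists of exactly two `G^j(E)`-orbits. -/
theorem stmt_6 (p : ℕ) [Fact p.Prime]
    (E' : Type) [Field E'] [Algebra ℚ_[p] E'] [FiniteDimensional ℚ_[p] E']
    (σ τ : E' ≃ₐ[ℚ_[p]] E')
    (hσ2 : σ * σ = 1) (hτ2 : τ * τ = 1) (hcomm : σ * τ = τ * σ)
    (hσ1 : σ ≠ 1) (hτ1 : τ ≠ 1) (hστ : σ ≠ τ)
    (ε : E') (hε : ε = 1 ∨ ε = -1)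
    (n : ℕ) (hn : 1 ≤ n)
    (j : Matrix (Fin n) (Fin n) E')
    (hj : inYnF ⇑σ ⇑τ ε j) :
    -- Y_n(F) ⊆ j ⋆ GL_n(E')
    (∀ y, inYnF ⇑σ ⇑τ ε y → ∃ g, IsUnit g ∧ y = (g.map ⇑τ)ᵀ * j * g) ∧
    -- X^j consists of exactly two G^j(E)-orbits
    (∃ x₁ x₂, Xj ⇑σ ⇑τ j x₁ ∧ Xj ⇑σ ⇑τ j x₂ ∧ ¬ orbGj ⇑σ ⇑τ j x₁ x₂ ∧
      ∀ x, Xj ⇑σ ⇑τ j x → orbGj ⇑σ ⇑τ j x₁ x ∨ orbGj ⇑σ ⇑τ j x₂ x) := by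
  have H : TwoInv (σ : E' →ₐ[ℚ_[p]] E') (τ : E' →ₐ[ℚ_[p]] E') := by
    refine ⟨fun x => congrArg (fun f : E' ≃ₐ[ℚ_[p]] E' => f x) hσ2,
      fun x => congrArg (fun f : E' ≃ₐ[ℚ_[p]] E' => f x) hτ2,
      fun x => congrArg (fun f : E' ≃ₐ[ℚ_[p]] E' => f x) hcomm, ?_, ?_, ?_⟩
    · by_contra! h; exact hσ1 (AlgEquiv.ext h)
    · by_contra! h; exact hτ1 (AlgEquiv.ext h)
    · by_contra! h; exact hστ (AlgEquiv.ext h)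
  have dn : ∀ y : Matrix (Fin n) (Fin n) E', IsUnit y → y.det ≠ 0 := fun y h =>
    ((Matrix.isUnit_iff_isUnit_det _).1 h).ne_zero
  have mp : ∀ y : Matrix (Fin n) (Fin n) E', (∀ a b, σ (y a b) = y a b) → y.map σ = y := by
    intro y h; ext a b; exact h a b
  obtain ⟨hj0, hj1, hj2⟩ := hj
  refine ⟨?_, main_two H ε hε hn j (dn _ hj0) (mp _ hj1) hj2⟩
  rintro y ⟨hy0, hy1, hy2⟩
  obtain ⟨g, hg, h⟩ := H.part1 ε hε hn j y (dn _ hj0) (dn _ hy0) (mp _ hj1) (mp _ hy1) hj2 hy2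
  exact ⟨g, hg, h.symm⟩
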